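/- arXiv:2402.15503 — 3 statements merged into one kernel-verified Lean document; each statement's English description precedes it below -/
import Mathlib

section
/- Let Ω ⊆ ℂ be a nonempty open connected set, z₀ a frontier point of Ω, and u : ℂ → ℂ holomorphic on Ω and nonconstant on Ω. Let W be an open neighborhood of z₀ and ũ : ℂ → ℂ a function that is C^∞ on W, agrees with u on W ∩ Ω, and satisfies ũ(z₀) = 0. Then the following are equivalent: (1) ũ vanishes to infinite order at z₀ in the L² sense; (2) for every open neighborhood U ⊆ W of z₀ and every constant C, the bound |∂̄ũ(z)| ≤ C·|ũ(z)| fails at some point z ∈ U; (3) for every open neighborhood U ⊆ W of z₀, the lower Lebesgue integral ∫_U |∂̄ũ(z)|²/|ũ(z)|² dv is infinite. -/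
/-!
Multiplying `ut` by a cutoff gives a smooth function `F` on the whole plane that equals `ut` near
`z₀` (`exists_global_extension`). Since `u` is holomorphic on `Ω` and `z₀` lies in the closure of
`Ω`, all derivatives of `∂̄F` vanish at `z₀`: the function `∂̄F` is *flat* there. Hence the Taylor
series of `F` at `z₀` only involves powers of `z - z₀`, and either `F` is flat at `z₀` or
`F ~ c (z - z₀)^k` with `c ≠ 0` (`flat_or_leading_term`).

In the second case `|F|` is bounded below by a multiple of `|z - z₀|^k` near `z₀`, while
`∂̄F = O(|z - z₀|^k)`. So `|∂̄F| / |F|` is bounded near `z₀`, and all three conditions fail.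

In the first case condition (1) is immediate, and (2) follows from (3) because a bounded quotient is
square integrable on a small disc. The heart of the matter is (3), proved in `flat_not_integrableOn`
by contradiction. By the identity theorem `F` does not vanish identically near `z₀`. For every `N`
the function `v = F / (z - z₀)^N` is smooth, with `∂̄v / v = ∂̄F / F`. The function
`log (|v|² + ε²)` is subharmonic up to an error controlled by `∫ |∂̄F|² / |F|²`, uniformly in `N` and
`ε` (`log_estimate`). Pairing it with a radial test function `η` whose `∂∂̄η` is the difference of
an outer and an inner positive weight (`exists_test_function`) bounds an inner mean of
`log (|v|² + ε²)` by an outer mean plus a constant independent of `N` and `ε`. With `ε` an upper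
bound for `|v|` on the outer region, the outer mean falls below the inner one by an amount growing
linearly in `N`, because of the factor `(z - z₀)^(-N)`; this is impossible for large `N`.
-/

open MeasureTheory

/-- The Wirtinger derivative `∂̄u(z) = (D(1) + i·D(i))/2`, where `D = fderiv ℝ u z`. -/
noncomputable def wirtingerDBar (f : ℂ → ℂ) (z : ℂ) : ℂ :=
  (fderiv ℝ f z 1 + Complex.I * fderiv ℝ f z Complex.I) / 2

/-- `f` vanishes to infinite order at `z₀` in the `L²` sense. -/
def VanishesInfiniteOrder (f : ℂ → ℂ) (z₀ : ℂ) : Prop :=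
  ∀ m : ℝ, 0 ≤ m →
    Filter.Tendsto (fun r : ℝ => r ^ (-m) * ∫ z in Metric.ball z₀ r, ‖f z‖ ^ 2)
      (nhdsWithin 0 (Set.Ioi 0)) (nhds 0)

/-! ### Wirtinger derivatives -/

noncomputable section

open Filter Topology Complex
open scoped ContDiff

/-- The Wirtinger derivative `∂u(z) = (D(1) - i·D(i))/2`, where `D = fderiv ℝ u z`. -/
def wirtingerD (f : ℂ → ℂ) (z : ℂ) : ℂ :=
  (fderiv ℝ f z 1 - Complex.I * fderiv ℝ f z Complex.I) / 2

/-- `wirtingerD` as a real-linear functional of the Fréchet derivative. -/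
def dFunctional : (ℂ →L[ℝ] ℂ) →L[ℝ] ℂ :=
  (2⁻¹ : ℂ) • (ContinuousLinearMap.apply ℝ ℂ (1 : ℂ) - I • ContinuousLinearMap.apply ℝ ℂ I)

/-- `wirtingerDBar` as a real-linear functional of the Fréchet derivative. -/
def dBarFunctional : (ℂ →L[ℝ] ℂ) →L[ℝ] ℂ :=
  (2⁻¹ : ℂ) • (ContinuousLinearMap.apply ℝ ℂ (1 : ℂ) + I • ContinuousLinearMap.apply ℝ ℂ I)

lemma dFunctional_apply (T : ℂ →L[ℝ] ℂ) : dFunctional T = (T 1 - I * T I) / 2 := by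
  simp [dFunctional]; ring

lemma dBarFunctional_apply (T : ℂ →L[ℝ] ℂ) : dBarFunctional T = (T 1 + I * T I) / 2 := by
  simp [dBarFunctional]; ring

lemma wirtingerD_eq (f : ℂ → ℂ) : wirtingerD f = dFunctional ∘ fderiv ℝ f := by
  ext z; simp [dFunctional_apply, wirtingerD]

lemma wirtingerDBar_eq (f : ℂ → ℂ) : wirtingerDBar f = dBarFunctional ∘ fderiv ℝ f := by
  ext z; simp [dBarFunctional_apply, wirtingerDBar]

/-- A real-linear map splits into its complex-linear and conjugate-linear parts. -/
lemma clm_decomp (T : ℂ →L[ℝ] ℂ) (h : ℂ) :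
    T h = dFunctional T * h + dBarFunctional T * (starRingEnd ℂ) h := by
  have h1 : T h = h.re * T 1 + h.im * T I := by
    conv_lhs => rw [← re_add_im h, show (h.re : ℂ) + h.im * I = h.re • (1 : ℂ) + h.im • I by simp]
    rw [map_add, map_smul, map_smul]; simp
  have h3 : (starRingEnd ℂ) h = h.re - h.im * I := by
    apply Complex.ext <;> simp
  rw [h1, h3, dFunctional_apply, dBarFunctional_apply]
  conv_rhs => rw [← re_add_im h]
  simp only [add_re, add_im, ofReal_re, ofReal_im, mul_re, mul_im, I_re, I_im]
  push_cast
  ring_nf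
  simp only [I_sq]
  ring

/-- The map `c ↦ (h ↦ c h)`. -/
def mulL : ℂ →L[ℝ] (ℂ →L[ℝ] ℂ) := ContinuousLinearMap.mul ℝ ℂ

/-- The map `c ↦ (h ↦ c h̄)`. -/
def mulConjL : ℂ →L[ℝ] (ℂ →L[ℝ] ℂ) :=
  ((ContinuousLinearMap.compL ℝ ℂ ℂ ℂ).flip (conjCLE : ℂ →L[ℝ] ℂ)).comp mulL

lemma fderiv_eq_wirtinger (f : ℂ → ℂ) :
    fderiv ℝ f = (fun z => mulL (wirtingerD f z)) + fun z => mulConjL (wirtingerDBar f z) := by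
  ext z h
  rw [clm_decomp (fderiv ℝ f z) h, wirtingerD_eq, wirtingerDBar_eq]
  simp [mulL, mulConjL]

lemma contDiff_wirtingerD {f : ℂ → ℂ} {n m : ℕ∞ω} (hf : ContDiff ℝ n f) (h : m + 1 ≤ n) :
    ContDiff ℝ m (wirtingerD f) := by
  rw [wirtingerD_eq]
  exact dFunctional.contDiff.comp (hf.fderiv_right h)

lemma contDiff_wirtingerDBar {f : ℂ → ℂ} {n m : ℕ∞ω} (hf : ContDiff ℝ n f) (h : m + 1 ≤ n) :
    ContDiff ℝ m (wirtingerDBar f) := by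
  rw [wirtingerDBar_eq]
  exact dBarFunctional.contDiff.comp (hf.fderiv_right h)

lemma fderiv_wirtinger_apply {f : ℂ → ℂ} (hf : ContDiff ℝ 2 f) (L : (ℂ →L[ℝ] ℂ) →L[ℝ] ℂ)
    (z h : ℂ) : fderiv ℝ (L ∘ fderiv ℝ f) z h = L (fderiv ℝ (fderiv ℝ f) z h) := by
  have h1 : DifferentiableAt ℝ (fderiv ℝ f) z :=
    ((hf.fderiv_right (m := 1) (by norm_num)).differentiable (by norm_num)) z
  rw [(L.hasFDerivAt.comp z h1.hasFDerivAt).fderiv]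
  rfl

lemma wirtinger_comm {f : ℂ → ℂ} (hf : ContDiff ℝ 2 f) (z : ℂ) :
    wirtingerDBar (wirtingerD f) z = wirtingerD (wirtingerDBar f) z := by
  have hs : IsSymmSndFDerivAt ℝ f z := hf.contDiffAt.isSymmSndFDerivAt (by simp)
  rw [wirtingerD_eq f, wirtingerDBar_eq f, wirtingerDBar, wirtingerD]
  simp only [fderiv_wirtinger_apply hf, dFunctional_apply, dBarFunctional_apply]
  rw [hs I 1]
  ring

lemma wirtingerDBar_eq_zero_of_differentiableAt {f : ℂ → ℂ} {z : ℂ}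
    (hf : DifferentiableAt ℂ f z) : wirtingerDBar f z = 0 := by
  rw [wirtingerDBar, hf.fderiv_restrictScalars ℝ]
  have : (fderiv ℂ f z) I = I * fderiv ℂ f z 1 := by
    conv_lhs => rw [show I = I • (1 : ℂ) by simp, map_smul]
    simp
  simp only [ContinuousLinearMap.coe_restrictScalars', this]
  ring_nf
  simp

/-! ### Flat functions -/

section Flat

variable {E F : Type*} [NormedAddCommGroup E] [NormedSpace ℝ E]
  [NormedAddCommGroup F] [NormedSpace ℝ F]

/-- All derivatives of `f` (including `f` itself) vanish at `z₀`. -/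
def Flat (f : ℂ → E) (z₀ : ℂ) : Prop := ∀ n : ℕ, iteratedFDeriv ℝ n f z₀ = 0

lemma Flat.apply_eq_zero {f : ℂ → E} {z₀ : ℂ} (h : Flat f z₀) : f z₀ = 0 := by
  have := h 0
  rw [← norm_eq_zero, norm_iteratedFDeriv_zero] at this
  exact norm_eq_zero.1 this

lemma Flat.fderiv {f : ℂ → E} {z₀ : ℂ} (h : Flat f z₀) : Flat (fderiv ℝ f) z₀ := by
  intro n
  rw [← norm_eq_zero, norm_iteratedFDeriv_fderiv, h (n + 1), norm_zero]

lemma Flat.clm_comp {f : ℂ → E} {z₀ : ℂ} (h : Flat f z₀) (hf : ContDiff ℝ ∞ f) (L : E →L[ℝ] F) :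
    Flat (fun z => L (f z)) z₀ := by
  intro n
  have := L.iteratedFDeriv_comp_left (x := z₀) hf.contDiffAt (i := n) (by exact_mod_cast le_top)
  rw [h n] at this
  rw [show (fun z => L (f z)) = L ∘ f from rfl, this]
  ext; simp

/-- A differentiable function is `O(|z - z₀|^(k+1))` when it vanishes at `z₀` and its derivative is
`O(|z - z₀|^k)`. -/
lemma isBigO_of_fderiv {f : ℂ → E} {z₀ : ℂ} {k : ℕ} (hf : Differentiable ℝ f) (h0 : f z₀ = 0)
    (h : fderiv ℝ f =O[𝓝 z₀] fun z => ‖z - z₀‖ ^ k) :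
    f =O[𝓝 z₀] fun z => ‖z - z₀‖ ^ (k + 1) := by
  obtain ⟨C, hC, hb⟩ := h.exists_pos
  rw [Asymptotics.IsBigOWith, Metric.eventually_nhds_iff_ball] at hb
  obtain ⟨ρ, hρ, hb⟩ := hb
  refine Asymptotics.IsBigO.of_bound C ?_
  filter_upwards [Metric.ball_mem_nhds z₀ hρ] with z hz
  have := (convex_closedBall z₀ ‖z - z₀‖).norm_image_sub_le_of_norm_fderiv_le (𝕜 := ℝ) (f := f)
    (C := C * ‖z - z₀‖ ^ k) (x := z₀) (y := z) (fun x _ => hf x) (fun x hx => ?_)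
    (by simp) (by simp [dist_eq_norm])
  · rw [h0, sub_zero] at this
    simpa [pow_succ, mul_assoc] using this
  · rw [mem_closedBall_iff_norm] at hx
    rw [mem_ball_iff_norm] at hz
    refine (hb x (by rw [mem_ball_iff_norm]; linarith)).trans ?_
    rw [norm_pow, norm_norm]
    gcongr

lemma Flat.isBigO (k : ℕ) {f : ℂ → E} {z₀ : ℂ} (h : Flat f z₀) (hf : ContDiff ℝ ∞ f) :
    f =O[𝓝 z₀] fun z => ‖z - z₀‖ ^ k := by
  induction k generalizing E with
  | zero =>
    simp only [pow_zero]
    exact (hf.continuous.tendsto z₀).isBigO_one ℝ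
  | succ k ih =>
    exact isBigO_of_fderiv (hf.differentiable (by simp)) h.apply_eq_zero
      (ih h.fderiv (hf.fderiv_right (by simp)))

/-- A flat smooth function stays smooth at `z₀` after division by `(z - z₀)^N`: the derivative of
the quotient is a sum of two quotients of the same kind. -/
lemma Flat.contDiff_div {E : Type*} [NormedAddCommGroup E] [NormedSpace ℝ E] [NormedSpace ℂ E]
    [IsScalarTower ℝ ℂ E] (n : ℕ) (N : ℕ) {f : ℂ → E} {z₀ : ℂ} (h : Flat f z₀)
    (hf : ContDiff ℝ ∞ f) : ContDiff ℝ n (fun z => ((z - z₀) ^ N)⁻¹ • f z) := by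
  induction n generalizing E N with
  | zero =>
    rw [Nat.cast_zero, contDiff_zero, continuous_iff_continuousAt]
    intro z
    by_cases hz : z = z₀
    · subst hz
      rw [ContinuousAt, h.apply_eq_zero, smul_zero]
      refine Asymptotics.IsBigO.trans_tendsto (g'' := fun w => ‖w - z‖) ?_ ?_
      · obtain ⟨C, hb⟩ := (h.isBigO (N + 1) hf).bound
        refine Asymptotics.IsBigO.of_bound C ?_
        filter_upwards [hb] with w hw
        by_cases hwz : w = z
        · subst hwz; simp [h.apply_eq_zero]
        have hp : 0 < ‖w - z‖ := norm_pos_iff.2 (sub_ne_zero.2 hwz)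
        rw [norm_smul, norm_inv, norm_pow, inv_mul_le_iff₀ (by positivity)]
        refine hw.trans (le_of_eq ?_)
        simp only [norm_pow, norm_norm]; ring
      · have : Continuous fun w => ‖w - z‖ := by fun_prop
        simpa using this.tendsto z
    · have : (z - z₀) ^ N ≠ 0 := pow_ne_zero _ (sub_ne_zero.2 hz)
      have h2 : Continuous f := hf.continuous
      exact ContinuousAt.smul (ContinuousAt.inv₀ (by fun_prop) this) h2.continuousAt
  | succ n ih =>
    have hd : ∀ z, HasFDerivAt (𝕜 := ℝ) (fun z => ((z - z₀) ^ N)⁻¹ • f z)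
        (((z - z₀) ^ N)⁻¹ • _root_.fderiv ℝ f z +
          (-(N : ℂ)) • ((z - z₀) ^ (N + 1))⁻¹ • (ContinuousLinearMap.lsmul ℝ ℂ).flip (f z)) z := by
      intro z
      by_cases hz : z = z₀
      · subst hz
        rw [h.fderiv.apply_eq_zero, h.apply_eq_zero]
        simp only [map_zero, smul_zero, add_zero]
        rw [hasFDerivAt_iff_isLittleO]
        simp only [h.apply_eq_zero, smul_zero, sub_zero, zero_apply]
        have h1 : (fun w => ((w - z) ^ N)⁻¹ • f w) =O[𝓝 z] fun w => ‖w - z‖ ^ 2 := by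
          obtain ⟨C, hb⟩ := (h.isBigO (N + 2) hf).bound
          refine Asymptotics.IsBigO.of_bound C ?_
          filter_upwards [hb] with w hw
          by_cases hwz : w = z
          · subst hwz; simp [h.apply_eq_zero]
          have hp : 0 < ‖w - z‖ := norm_pos_iff.2 (sub_ne_zero.2 hwz)
          rw [norm_smul, norm_inv, norm_pow, inv_mul_le_iff₀ (by positivity)]
          refine hw.trans (le_of_eq ?_)
          simp only [norm_pow, norm_norm]; ring
        refine h1.trans_isLittleO ?_
        have : (fun w : ℂ => ‖w‖ ^ 2) =o[𝓝 0] fun w => w := by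
          simpa using Asymptotics.isLittleO_norm_pow_id (E' := ℂ) (n := 2) (by norm_num)
        have ht : Tendsto (fun w => w - z) (𝓝 z) (𝓝 0) := by
          have : Continuous fun w => w - z := by fun_prop
          simpa using this.tendsto z
        exact this.comp_tendsto ht
      · have hne : (z - z₀) ≠ 0 := sub_ne_zero.2 hz
        have h1 : HasDerivAt (fun z : ℂ => ((z - z₀) ^ N)⁻¹)
            (-(N : ℂ) * ((z - z₀) ^ (N + 1))⁻¹) z := by
          have := (((hasDerivAt_id z).sub_const z₀).pow N).inv (pow_ne_zero N hne)
          refine this.congr_deriv ?_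
          rcases N with _ | N
          · simp
          · simp only [id, Nat.add_sub_cancel, mul_one]
            push_cast
            simp only [Pi.pow_apply]
            field_simp
            ring
        have h2 := h1.hasFDerivAt.restrictScalars ℝ
        have h3 := h2.smul (hf.differentiable (by simp) z).hasFDerivAt
        refine h3.congr_fderiv ?_
        ext w
        simp [smul_smul]
        ring_nf
    rw [Nat.cast_succ, contDiff_succ_iff_fderiv]
    refine ⟨fun z => (hd z).differentiableAt, by simp, ?_⟩
    have : _root_.fderiv ℝ (fun z => ((z - z₀) ^ N)⁻¹ • f z) = _ := funext fun z => (hd z).fderiv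
    rw [this]
    refine (ih N h.fderiv (hf.fderiv_right (by simp))).add (ContDiff.const_smul _ ?_)
    exact ih (N + 1) (h.clm_comp hf _) ((ContinuousLinearMap.contDiff _).comp hf)

end Flat

/-! ### Leading terms of functions with flat `∂̄`-derivative -/

lemma flat_wirtingerDBar_wirtingerD {f : ℂ → ℂ} {z₀ : ℂ} (hf : ContDiff ℝ ∞ f)
    (h : Flat (wirtingerDBar f) z₀) : Flat (wirtingerDBar (wirtingerD f)) z₀ := by
  have h1 : wirtingerDBar (wirtingerD f) = fun z => dFunctional (fderiv ℝ (wirtingerDBar f) z) := by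
    ext z
    rw [wirtinger_comm (hf.of_le (WithTop.coe_le_coe.2 (le_top : (2 : ℕ∞) ≤ ⊤))), wirtingerD_eq]
    rfl
  rw [h1]
  exact h.fderiv.clm_comp
    ((contDiff_wirtingerDBar hf (m := ∞) (by simp)).fderiv_right (m := ∞) (by simp)) _

/-- When `∂̄f` is flat, all mixed derivatives vanish at `z₀`, so flatness of `f` only needs the pure
derivatives `∂^j f` to vanish there. -/
lemma flat_of_coeffs {f : ℂ → ℂ} {z₀ : ℂ} (hf : ContDiff ℝ ∞ f)
    (h : Flat (wirtingerDBar f) z₀) (h0 : ∀ j, (wirtingerD^[j] f) z₀ = 0) : Flat f z₀ := by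
  intro n
  induction n generalizing f with
  | zero => ext; simpa using h0 0
  | succ n ih =>
    have hD : ContDiff ℝ ∞ (wirtingerD f) := contDiff_wirtingerD hf (by simp)
    have hB : ContDiff ℝ ∞ (wirtingerDBar f) := contDiff_wirtingerDBar hf (by simp)
    rw [← norm_eq_zero, ← norm_iteratedFDeriv_fderiv, norm_eq_zero, fderiv_eq_wirtinger]
    have e1 : ContDiff ℝ n (fun z => mulL (wirtingerD f z)) :=
      (mulL.contDiff.comp hD).of_le (by exact_mod_cast le_top)
    have e2 : ContDiff ℝ n (fun z => mulConjL (wirtingerDBar f z)) :=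
      (mulConjL.contDiff.comp hB).of_le (by exact_mod_cast le_top)
    rw [iteratedFDeriv_add_apply e1.contDiffAt e2.contDiffAt, (h.clm_comp hB mulConjL) n, add_zero]
    have := mulL.iteratedFDeriv_comp_left (x := z₀) hD.contDiffAt (i := n)
      (by exact_mod_cast le_top)
    rw [show (fun z => mulL (wirtingerD f z)) = mulL ∘ wirtingerD f from rfl, this,
      ih hD (flat_wirtingerDBar_wirtingerD hf h)
        (fun j => by rw [← Function.iterate_succ_apply]; exact h0 (j + 1))]
    ext; simp

/-- When `∂̄f` is flat, the Taylor polynomial of `f` at `z₀` is holomorphic, so the first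
possibly nonzero coefficient `∂^k f(z₀) / k!` gives the leading term. -/
lemma leading_term (k : ℕ) {f : ℂ → ℂ} {z₀ : ℂ} (hf : ContDiff ℝ ∞ f)
    (h : Flat (wirtingerDBar f) z₀) (h0 : ∀ j < k, (wirtingerD^[j] f) z₀ = 0) :
    (fun z => f z - (wirtingerD^[k] f) z₀ / (k.factorial : ℂ) * (z - z₀) ^ k) =O[𝓝 z₀]
      fun z => ‖z - z₀‖ ^ (k + 1) := by
  induction k generalizing f with
  | zero =>
    refine isBigO_of_fderiv ?_ (by simp) ?_
    · have := hf.differentiable (by simp)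
      fun_prop
    · simp only [pow_zero, mul_one]
      have : Continuous (fderiv ℝ f) := hf.continuous_fderiv (by simp)
      simpa [fderiv_sub_const] using (this.tendsto z₀).isBigO_one ℝ
  | succ k ih =>
    have hD : ContDiff ℝ ∞ (wirtingerD f) := contDiff_wirtingerD hf (by simp)
    have hB : ContDiff ℝ ∞ (wirtingerDBar f) := contDiff_wirtingerDBar hf (by simp)
    have h1 := ih hD (flat_wirtingerDBar_wirtingerD hf h)
        (fun j hj => by rw [← Function.iterate_succ_apply]; exact h0 (j + 1) (by omega))
    rw [← Function.iterate_succ_apply] at h1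
    set c := (wirtingerD^[k + 1] f) z₀ with hc
    have hfd := hf.differentiable (by simp)
    refine isBigO_of_fderiv (by fun_prop) ?_ ?_
    · have := h0 0 (by omega)
      simpa using this
    · have hder : fderiv ℝ (fun z => f z - c / ((k + 1).factorial : ℂ) * (z - z₀) ^ (k + 1)) =
          fun z => mulL (wirtingerD f z - c / (k.factorial : ℂ) * (z - z₀) ^ k) +
            mulConjL (wirtingerDBar f z) := by
        ext1 z
        have h2 : HasDerivAt (fun z : ℂ => c / ((k + 1).factorial : ℂ) * (z - z₀) ^ (k + 1))
            (c / (k.factorial : ℂ) * (z - z₀) ^ k) z := by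
          have := (((hasDerivAt_id z).sub_const z₀).pow (k + 1)).const_mul
            (c / ((k + 1).factorial : ℂ))
          refine this.congr_deriv ?_
          have : (k.factorial : ℂ) ≠ 0 := by exact_mod_cast k.factorial_ne_zero
          have : (k : ℂ) + 1 ≠ 0 := by exact_mod_cast k.succ_ne_zero
          rw [Nat.factorial_succ]
          push_cast
          simp only [id]
          field_simp
        have h3 := (hfd z).hasFDerivAt.sub (h2.hasFDerivAt.restrictScalars ℝ)
        refine h3.fderiv.trans ?_
        rw [fderiv_eq_wirtinger]
        ext w
        simp [mulL]
        ring
      rw [hder]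
      refine Asymptotics.IsBigO.add ?_ ?_
      · exact (mulL.isBigO_comp _ _).trans h1
      · exact (mulConjL.isBigO_comp _ _).trans (h.isBigO (k + 1) hB)

/-- A smooth function whose `∂̄`-derivative is flat at `z₀` is either flat itself or asymptotic to a
nonzero monomial `c (z - z₀)^k`. -/
lemma flat_or_leading_term {f : ℂ → ℂ} {z₀ : ℂ} (hf : ContDiff ℝ ∞ f)
    (h : Flat (wirtingerDBar f) z₀) :
    Flat f z₀ ∨ ∃ k : ℕ, ∃ c : ℂ, c ≠ 0 ∧
      (fun z => f z - c * (z - z₀) ^ k) =O[𝓝 z₀] fun z => ‖z - z₀‖ ^ (k + 1) := by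
  classical
  by_cases h0 : ∀ j, (wirtingerD^[j] f) z₀ = 0
  · exact Or.inl (flat_of_coeffs hf h h0)
  · push Not at h0
    refine Or.inr ⟨Nat.find h0, _, ?_, leading_term (Nat.find h0) hf h fun j hj => ?_⟩
    · exact div_ne_zero (Nat.find_spec h0) (by exact_mod_cast Nat.factorial_ne_zero _)
    · simpa using Nat.find_min h0 hj

/-! ### Wirtinger calculus and integration by parts -/

section Calculus

variable {f g : ℂ → ℂ} {z : ℂ}

lemma wirtingerD_mul (hf : DifferentiableAt ℝ f z) (hg : DifferentiableAt ℝ g z) :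
    wirtingerD (fun z => f z * g z) z = wirtingerD f z * g z + f z * wirtingerD g z := by
  simp only [wirtingerD, fderiv_fun_mul hf hg, add_apply, smul_apply, smul_eq_mul]
  ring

lemma wirtingerDBar_mul (hf : DifferentiableAt ℝ f z) (hg : DifferentiableAt ℝ g z) :
    wirtingerDBar (fun z => f z * g z) z =
      wirtingerDBar f z * g z + f z * wirtingerDBar g z := by
  simp only [wirtingerDBar, fderiv_fun_mul hf hg, add_apply, smul_apply, smul_eq_mul]
  ring

lemma fderiv_conj_apply (hf : DifferentiableAt ℝ f z) (h : ℂ) :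
    fderiv ℝ (fun z => (starRingEnd ℂ) (f z)) z h = (starRingEnd ℂ) (fderiv ℝ f z h) := by
  have := (conjCLE : ℂ →L[ℝ] ℂ).hasFDerivAt.comp z hf.hasFDerivAt
  exact congrArg (fun T : ℂ →L[ℝ] ℂ => T h) this.fderiv

lemma wirtingerD_conj (hf : DifferentiableAt ℝ f z) :
    wirtingerD (fun z => (starRingEnd ℂ) (f z)) z = (starRingEnd ℂ) (wirtingerDBar f z) := by
  simp only [wirtingerD, wirtingerDBar, fderiv_conj_apply hf]
  simp [sub_eq_add_neg, map_ofNat]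

lemma wirtingerDBar_conj (hf : DifferentiableAt ℝ f z) :
    wirtingerDBar (fun z => (starRingEnd ℂ) (f z)) z = (starRingEnd ℂ) (wirtingerD f z) := by
  simp only [wirtingerD, wirtingerDBar, fderiv_conj_apply hf]
  simp [map_ofNat]

lemma wirtingerD_add_const (c : ℂ) :
    wirtingerD (fun z => f z + c) z = wirtingerD f z := by
  simp [wirtingerD]

lemma wirtingerDBar_add_const (c : ℂ) :
    wirtingerDBar (fun z => f z + c) z = wirtingerDBar f z := by
  simp [wirtingerDBar]

lemma fderiv_inv_apply (hf : DifferentiableAt ℝ f z) (h0 : f z ≠ 0) (h : ℂ) :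
    fderiv ℝ (fun z => (f z)⁻¹) z h = -fderiv ℝ f z h / f z ^ 2 := by
  have := ((hasDerivAt_inv h0).hasFDerivAt.restrictScalars ℝ).comp z hf.hasFDerivAt
  have h2 := congrArg (fun T : ℂ →L[ℝ] ℂ => T h) this.fderiv
  refine h2.trans ?_
  simp
  ring

lemma wirtingerD_inv (hf : DifferentiableAt ℝ f z) (h0 : f z ≠ 0) :
    wirtingerD (fun z => (f z)⁻¹) z = -wirtingerD f z / f z ^ 2 := by
  simp only [wirtingerD, fderiv_inv_apply hf h0]
  ring

lemma wirtingerDBar_inv (hf : DifferentiableAt ℝ f z) (h0 : f z ≠ 0) :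
    wirtingerDBar (fun z => (f z)⁻¹) z = -wirtingerDBar f z / f z ^ 2 := by
  simp only [wirtingerDBar, fderiv_inv_apply hf h0]
  ring

lemma wirtingerD_log {r : ℂ → ℝ} (hr : DifferentiableAt ℝ r z) (h0 : r z ≠ 0) :
    wirtingerD (fun z => ((Real.log (r z) : ℝ) : ℂ)) z =
      wirtingerD (fun z => (r z : ℂ)) z * ((r z : ℂ))⁻¹ := by
  have h1 (h : ℂ) : fderiv ℝ (fun z => (r z : ℂ)) z h = (fderiv ℝ r z h : ℂ) := by
    have := ofRealCLM.hasFDerivAt.comp z hr.hasFDerivAt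
    exact congrArg (fun T : ℂ →L[ℝ] ℂ => T h) this.fderiv
  have h2 (h : ℂ) : fderiv ℝ (fun z => ((Real.log (r z) : ℝ) : ℂ)) z h =
      ((r z : ℂ))⁻¹ * (fderiv ℝ r z h : ℂ) := by
    have := ofRealCLM.hasFDerivAt.comp z (hr.hasFDerivAt.log h0)
    refine (congrArg (fun T : ℂ →L[ℝ] ℂ => T h) this.fderiv).trans ?_
    simp
  simp only [wirtingerD, h1, h2]
  ring

lemma integral_fderiv_mul {f g : ℂ → ℂ} (hf : ContDiff ℝ 1 f) (hg : ContDiff ℝ 1 g)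
    (hc : HasCompactSupport g) (w : ℂ) :
    Integrable (fun z => fderiv ℝ f z w * g z) ∧ Integrable (fun z => f z * fderiv ℝ g z w) ∧
    ∫ z, f z * fderiv ℝ g z w = -∫ z, fderiv ℝ f z w * g z := by
  have f1 : Continuous (fun z => fderiv ℝ f z w) :=
    (hf.continuous_fderiv (by simp)).clm_apply continuous_const
  have g1 : Continuous (fun z => fderiv ℝ g z w) :=
    (hg.continuous_fderiv (by simp)).clm_apply continuous_const
  have gc : HasCompactSupport (fun z => fderiv ℝ g z w) := hc.fderiv_apply ℝ w
  have i1 : Integrable (fun z => fderiv ℝ f z w * g z) :=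
    (f1.mul hg.continuous).integrable_of_hasCompactSupport hc.mul_left
  have i2 : Integrable (fun z => f z * fderiv ℝ g z w) :=
    (hf.continuous.mul g1).integrable_of_hasCompactSupport gc.mul_left
  have i3 : Integrable (fun z => f z * g z) :=
    (hf.continuous.mul hg.continuous).integrable_of_hasCompactSupport hc.mul_left
  exact ⟨i1, i2, integral_mul_fderiv_eq_neg_fderiv_mul_of_integrable i1 i2 i3
    (fun x _ => hf.differentiable (by simp) x) (fun x _ => hg.differentiable (by simp) x)⟩

lemma integral_mul_wirtingerD {f g : ℂ → ℂ} (hf : ContDiff ℝ 1 f) (hg : ContDiff ℝ 1 g)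
    (hc : HasCompactSupport g) :
    ∫ z, f z * wirtingerD g z = -∫ z, wirtingerD f z * g z := by
  obtain ⟨a1, b1, c1⟩ := integral_fderiv_mul hf hg hc 1
  obtain ⟨a2, b2, c2⟩ := integral_fderiv_mul hf hg hc I
  have e1 : (fun z => f z * wirtingerD g z) = fun z =>
      (1 / 2 : ℂ) * (f z * fderiv ℝ g z 1) - (I / 2) * (f z * fderiv ℝ g z I) := by
    ext z; simp only [wirtingerD]; ring
  have e2 : (fun z => wirtingerD f z * g z) = fun z =>
      (1 / 2 : ℂ) * (fderiv ℝ f z 1 * g z) - (I / 2) * (fderiv ℝ f z I * g z) := by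
    ext z; simp only [wirtingerD]; ring
  rw [e1, e2, integral_sub (b1.const_mul _) (b2.const_mul _),
    integral_sub (a1.const_mul _) (a2.const_mul _)]
  simp only [integral_const_mul, c1, c2]
  ring

lemma integral_mul_wirtingerDBar {f g : ℂ → ℂ} (hf : ContDiff ℝ 1 f) (hg : ContDiff ℝ 1 g)
    (hc : HasCompactSupport g) :
    ∫ z, f z * wirtingerDBar g z = -∫ z, wirtingerDBar f z * g z := by
  obtain ⟨a1, b1, c1⟩ := integral_fderiv_mul hf hg hc 1
  obtain ⟨a2, b2, c2⟩ := integral_fderiv_mul hf hg hc I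
  have e1 : (fun z => f z * wirtingerDBar g z) = fun z =>
      (1 / 2 : ℂ) * (f z * fderiv ℝ g z 1) + (I / 2) * (f z * fderiv ℝ g z I) := by
    ext z; simp only [wirtingerDBar]; ring
  have e2 : (fun z => wirtingerDBar f z * g z) = fun z =>
      (1 / 2 : ℂ) * (fderiv ℝ f z 1 * g z) + (I / 2) * (fderiv ℝ f z I * g z) := by
    ext z; simp only [wirtingerDBar]; ring
  rw [e1, e2, integral_add (b1.const_mul _) (b2.const_mul _),
    integral_add (a1.const_mul _) (a2.const_mul _)]
  simp only [integral_const_mul, c1, c2]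
  ring

lemma hasCompactSupport_wirtingerD (hc : HasCompactSupport f) :
    HasCompactSupport (wirtingerD f) := by
  rw [wirtingerD_eq]
  exact (hc.fderiv ℝ).comp_left (map_zero _)

lemma hasCompactSupport_wirtingerDBar (hc : HasCompactSupport f) :
    HasCompactSupport (wirtingerDBar f) := by
  rw [wirtingerDBar_eq]
  exact (hc.fderiv ℝ).comp_left (map_zero _)

lemma wirtingerDBar_eq_zero_of_notMem_tsupport (hz : z ∉ tsupport f) : wirtingerDBar f z = 0 := by
  rw [wirtingerDBar, fderiv_of_notMem_tsupport ℝ hz]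
  simp

end Calculus

/-! ### Almost subharmonicity of `log (|v|² + ε²)` -/

section LogEstimate

/-- For `v` of class `C²` and `D = |v|² + ε²`, the function `log D` satisfies
`∂̄∂ log D = ε² (|∂v|² - |∂̄v|²) / D² + ∂(v̄ ∂̄v / D) + ∂̄(v (∂̄v)‾ / D)`, here in weak form. -/
lemma integral_log_identity {v : ℂ → ℂ} (hv : ContDiff ℝ 2 v) {η : ℂ → ℂ} (hη : ContDiff ℝ 2 η)
    (hc : HasCompactSupport η) {ε : ℝ} (hε : 0 < ε) :
    ∫ z, ((Real.log (‖v z‖ ^ 2 + ε ^ 2) : ℝ) : ℂ) * wirtingerD (wirtingerDBar η) z =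
    ∫ z, (((ε ^ 2 * (‖wirtingerD v z‖ ^ 2 - ‖wirtingerDBar v z‖ ^ 2) /
        (‖v z‖ ^ 2 + ε ^ 2) ^ 2 : ℝ) : ℂ) * η z
      - (starRingEnd ℂ) (v z) * wirtingerDBar v z * (((‖v z‖ ^ 2 + ε ^ 2 : ℝ) : ℂ))⁻¹
          * wirtingerD η z
      - v z * (starRingEnd ℂ) (wirtingerDBar v z) * (((‖v z‖ ^ 2 + ε ^ 2 : ℝ) : ℂ))⁻¹
          * wirtingerDBar η z) := by
  set D : ℂ → ℝ := fun z => ‖v z‖ ^ 2 + ε ^ 2 with hD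
  set a := wirtingerD v with ha
  set b := wirtingerDBar v with hb
  have hDpos : ∀ z, 0 < D z := fun z => by positivity
  have hDne : ∀ z, (D z : ℂ) ≠ 0 := fun z => by exact_mod_cast (hDpos z).ne'
  have hv1 : ContDiff ℝ 1 v := hv.of_le (by norm_num)
  have hvb : ContDiff ℝ 2 (fun z => (starRingEnd ℂ) (v z)) :=
    (conjCLE : ℂ →L[ℝ] ℂ).contDiff.comp hv
  have hvb1 : ContDiff ℝ 1 (fun z => (starRingEnd ℂ) (v z)) := hvb.of_le (by norm_num)
  have ha1 : ContDiff ℝ 1 a := contDiff_wirtingerD hv (by norm_num)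
  have hb1 : ContDiff ℝ 1 b := contDiff_wirtingerDBar hv (by norm_num)
  have hbb1 : ContDiff ℝ 1 (fun z => (starRingEnd ℂ) (b z)) :=
    (conjCLE : ℂ →L[ℝ] ℂ).contDiff.comp hb1
  have hη1 : ContDiff ℝ 1 η := hη.of_le (by norm_num)
  have hDη : ContDiff ℝ 1 (wirtingerD η) := contDiff_wirtingerD hη (by norm_num)
  have hBη : ContDiff ℝ 1 (wirtingerDBar η) := contDiff_wirtingerDBar hη (by norm_num)
  have hDc : ∀ z, (D z : ℂ) = v z * (starRingEnd ℂ) (v z) + (ε : ℂ) ^ 2 := fun z => by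
    simp [hD, mul_conj, normSq_eq_norm_sq]
  have hDr2 : ContDiff ℝ 1 D := (hv1.norm_sq ℝ).add contDiff_const
  have hDcf : (fun z => (D z : ℂ)) = fun z => v z * (starRingEnd ℂ) (v z) + (ε : ℂ) ^ 2 :=
    funext hDc
  have hDc1 : ContDiff ℝ 1 (fun z => (D z : ℂ)) := ofRealCLM.contDiff.comp hDr2
  have hDi1 : ContDiff ℝ 1 (fun z => (D z : ℂ)⁻¹) := hDc1.inv hDne
  have hlog1 : ContDiff ℝ 1 (fun z => ((Real.log (D z) : ℝ) : ℂ)) :=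
    ofRealCLM.contDiff.comp (hDr2.log fun z => (hDpos z).ne')
  have dv : Differentiable ℝ v := hv1.differentiable (by simp)
  have dvb : Differentiable ℝ (fun z => (starRingEnd ℂ) (v z)) := hvb1.differentiable (by simp)
  have da : Differentiable ℝ a := ha1.differentiable (by simp)
  have db : Differentiable ℝ b := hb1.differentiable (by simp)
  have dD : Differentiable ℝ (fun z => (D z : ℂ)) := hDc1.differentiable (by simp)
  have dDi : Differentiable ℝ (fun z => (D z : ℂ)⁻¹) := hDi1.differentiable (by simp)
  have wD : ∀ z, wirtingerD (fun z => (D z : ℂ)) z =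
      a z * (starRingEnd ℂ) (v z) + v z * (starRingEnd ℂ) (b z) := fun z => by
    rw [hDcf, wirtingerD_add_const, wirtingerD_mul (dv z) (dvb z), wirtingerD_conj (dv z)]
  have wB : ∀ z, wirtingerDBar (fun z => (D z : ℂ)) z =
      b z * (starRingEnd ℂ) (v z) + v z * (starRingEnd ℂ) (a z) := fun z => by
    rw [hDcf, wirtingerDBar_add_const, wirtingerDBar_mul (dv z) (dvb z), wirtingerDBar_conj (dv z)]
  set A : ℂ → ℂ := fun z => (starRingEnd ℂ) (v z) * a z * (D z : ℂ)⁻¹ with hA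
  set B : ℂ → ℂ := fun z => v z * (starRingEnd ℂ) (b z) * (D z : ℂ)⁻¹ with hB
  set B' : ℂ → ℂ := fun z => (starRingEnd ℂ) (v z) * b z * (D z : ℂ)⁻¹ with hB'
  have hA1 : ContDiff ℝ 1 A := (hvb1.mul ha1).mul hDi1
  have hB1 : ContDiff ℝ 1 B := (hv1.mul hbb1).mul hDi1
  have hB'1 : ContDiff ℝ 1 B' := (hvb1.mul hb1).mul hDi1
  set X : ℂ → ℂ := fun z =>
    ((ε ^ 2 * (‖a z‖ ^ 2 - ‖b z‖ ^ 2) / (D z) ^ 2 : ℝ) : ℂ) with hX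
  have hXc : Continuous X := by
    refine continuous_ofReal.comp (Continuous.div ?_ ?_ fun z => by have := hDpos z; positivity)
    · have := ha1.continuous; have := hb1.continuous; fun_prop
    · have := hDr2.continuous; fun_prop
  have e1 : ∀ z, wirtingerD (fun z => ((Real.log (D z) : ℝ) : ℂ)) z = A z + B z := fun z => by
    rw [wirtingerD_log (hDr2.differentiable (by simp) z) (hDpos z).ne', wD]
    simp only [hA, hB]; ring
  have e2 : ∀ z, wirtingerDBar A z = X z + wirtingerD B' z := fun z => by
    have h1 : wirtingerDBar A z = _ := wirtingerDBar_mul ((dvb z).mul (da z)) (dDi z)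
    have h2 : wirtingerD B' z = _ := wirtingerD_mul ((dvb z).mul (db z)) (dDi z)
    rw [h1, h2, wirtingerDBar_inv (dD z) (hDne z), wirtingerD_inv (dD z) (hDne z),
      wirtingerDBar_mul (dvb z) (da z), wirtingerD_mul (dvb z) (db z), wirtingerDBar_conj (dv z),
      wirtingerD_conj (dv z), wD, wB, ha, hb, wirtinger_comm hv z]
    simp only [← ha, ← hb, hX]
    push_cast
    have hε2 : (ε : ℂ) ^ 2 = D z - v z * (starRingEnd ℂ) (v z) := by rw [hDc]; ring
    have n1 : ((‖a z‖ : ℝ) : ℂ) ^ 2 = a z * (starRingEnd ℂ) (a z) := by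
      rw [mul_conj, normSq_eq_norm_sq]; push_cast; rfl
    have n2 : ((‖b z‖ : ℝ) : ℂ) ^ 2 = b z * (starRingEnd ℂ) (b z) := by
      rw [mul_conj, normSq_eq_norm_sq]; push_cast; rfl
    rw [hε2, n1, n2]
    have := hDne z
    field_simp
    ring
  have hcD := hasCompactSupport_wirtingerD hc
  have hcB := hasCompactSupport_wirtingerDBar hc
  have i1 : Integrable (fun z => A z * wirtingerDBar η z) :=
    (hA1.continuous.mul hBη.continuous).integrable_of_hasCompactSupport hcB.mul_left
  have i2 : Integrable (fun z => B z * wirtingerDBar η z) :=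
    (hB1.continuous.mul hBη.continuous).integrable_of_hasCompactSupport hcB.mul_left
  have i3 : Integrable (fun z => X z * η z) :=
    (hXc.mul hη.continuous).integrable_of_hasCompactSupport hc.mul_left
  have i4 : Integrable (fun z => wirtingerD B' z * η z) :=
    ((contDiff_wirtingerD (m := 0) hB'1 (by simp)).continuous.mul
      hη.continuous).integrable_of_hasCompactSupport hc.mul_left
  have i5 : Integrable (fun z => B' z * wirtingerD η z) :=
    (hB'1.continuous.mul hDη.continuous).integrable_of_hasCompactSupport hcD.mul_left
  have s1 := integral_mul_wirtingerD hlog1 hBη hcB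
  have s2 := integral_mul_wirtingerDBar hA1 hη1 hc
  have s3 := integral_mul_wirtingerD hB'1 hη1 hc
  simp only [e1, add_mul] at s1
  rw [integral_add i1 i2] at s1
  simp only [e2, add_mul] at s2
  rw [integral_add i3 i4] at s2
  have s4 : ∫ z, (X z * η z - B' z * wirtingerD η z - B z * wirtingerDBar η z) =
      (∫ z, X z * η z) - (∫ z, B' z * wirtingerD η z) - ∫ z, B z * wirtingerDBar η z := by
    have := integral_sub (i3.sub i5) i2
    simp only [Pi.sub_apply] at this
    rw [this]
    have := integral_sub i3 i5
    rw [this]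
  refine (s1.trans ?_).trans s4.symm
  rw [s2, s3]
  ring

/-- If `|∂̄v|² ≤ q |v|²` on the support of `η ≥ 0`, then `∫ log (|v|² + ε²) ∂∂̄η` is bounded below by
a constant depending only on `q` and `η`, not on `v` and `ε`. -/
lemma log_estimate {v : ℂ → ℂ} (hv : ContDiff ℝ 2 v) {η : ℂ → ℝ} (hη : ContDiff ℝ 2 η)
    (hc : HasCompactSupport η) (h0 : ∀ z, 0 ≤ η z) {ε : ℝ} (hε : 0 < ε) {q : ℂ → ℝ}
    (hq0 : ∀ z, 0 ≤ q z)
    (hq : ∀ᵐ z, z ∈ tsupport η → ‖wirtingerDBar v z‖ ^ 2 ≤ q z * ‖v z‖ ^ 2)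
    (hInteg : Integrable fun z =>
      q z * η z + (q z + 1) * ‖wirtingerDBar (fun z => (η z : ℂ)) z‖) :
    -∫ z, (q z * η z + (q z + 1) * ‖wirtingerDBar (fun z => (η z : ℂ)) z‖) ≤
    (∫ z, ((Real.log (‖v z‖ ^ 2 + ε ^ 2) : ℝ) : ℂ) *
      wirtingerD (wirtingerDBar fun z => (η z : ℂ)) z).re := by
  have hηc : ContDiff ℝ 2 (fun z => (η z : ℂ)) := ofRealCLM.contDiff.comp hη
  have hcc : HasCompactSupport (fun z => (η z : ℂ)) := hc.comp_left (g := ofReal) (by simp)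
  have hv1 : ContDiff ℝ 1 v := hv.of_le (by norm_num)
  rw [integral_log_identity hv hηc hcc hε]
  set ηc : ℂ → ℂ := fun z => (η z : ℂ) with hηcdef
  have hconj : ∀ z, wirtingerD ηc z = (starRingEnd ℂ) (wirtingerDBar ηc z) := fun z => by
    rw [← wirtingerD_conj (hηc.differentiable (by norm_num) z)]
    simp [hηcdef]
  have cv := hv.continuous
  have cD : Continuous (fun z => wirtingerD v z) :=
    (contDiff_wirtingerD (m := 0) hv1 (by simp)).continuous
  have cB : Continuous (fun z => wirtingerDBar v z) :=
    (contDiff_wirtingerDBar (m := 0) hv1 (by simp)).continuous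
  have cηD : Continuous (fun z => wirtingerD ηc z) :=
    (contDiff_wirtingerD (m := 0) (n := 2) hηc (by norm_num)).continuous
  have cηB : Continuous (fun z => wirtingerDBar ηc z) :=
    (contDiff_wirtingerDBar (m := 0) (n := 2) hηc (by norm_num)).continuous
  have hDpos : ∀ z, 0 < ‖v z‖ ^ 2 + ε ^ 2 := fun z => by positivity
  have hDne : ∀ z, ((‖v z‖ ^ 2 + ε ^ 2 : ℝ) : ℂ) ≠ 0 := fun z => by
    exact_mod_cast (hDpos z).ne'
  have cDi : Continuous fun z => ((‖v z‖ ^ 2 + ε ^ 2 : ℝ) : ℂ)⁻¹ :=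
    Continuous.inv₀ (by fun_prop) hDne
  have i1 : Integrable fun z => (((ε ^ 2 * (‖wirtingerD v z‖ ^ 2 - ‖wirtingerDBar v z‖ ^ 2) /
        (‖v z‖ ^ 2 + ε ^ 2) ^ 2 : ℝ) : ℂ) * ηc z) := by
    refine Continuous.integrable_of_hasCompactSupport ?_ hcc.mul_left
    refine (continuous_ofReal.comp (Continuous.div (by fun_prop) (by fun_prop)
      fun z => by have := hDpos z; positivity)).mul hηc.continuous
  have i2 : Integrable fun z => (starRingEnd ℂ) (v z) * wirtingerDBar v z *
      (((‖v z‖ ^ 2 + ε ^ 2 : ℝ) : ℂ))⁻¹ * wirtingerD ηc z := by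
    refine Continuous.integrable_of_hasCompactSupport ?_
      (hasCompactSupport_wirtingerD hcc).mul_left
    exact (((continuous_conj.comp cv).mul cB).mul cDi).mul cηD
  have i3 : Integrable fun z => v z * (starRingEnd ℂ) (wirtingerDBar v z) *
      (((‖v z‖ ^ 2 + ε ^ 2 : ℝ) : ℂ))⁻¹ * wirtingerDBar ηc z := by
    refine Continuous.integrable_of_hasCompactSupport ?_
      (hasCompactSupport_wirtingerDBar hcc).mul_left
    exact ((cv.mul (continuous_conj.comp cB)).mul cDi).mul cηB
  rw [← integral_neg]
  refine le_trans (integral_mono_ae hInteg.neg ((i1.sub i2).sub i3).re ?_)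
    (le_of_eq (integral_re ((i1.sub i2).sub i3)))
  filter_upwards [hq] with z hz
  simp only [RCLike.re_eq_complex_re, sub_re, Pi.sub_apply]
  by_cases hzt : z ∈ tsupport η
  swap
  · have hz' : z ∉ tsupport ηc := fun h => hzt (tsupport_comp_subset (g := ofReal) (by simp) η h)
    have e1 : wirtingerDBar ηc z = 0 := wirtingerDBar_eq_zero_of_notMem_tsupport hz'
    have e2 : η z = 0 := image_eq_zero_of_notMem_tsupport hzt
    have e3 : ηc z = 0 := by simp [hηcdef, e2]
    rw [hconj, e1, e2, e3]; simp
  have hb := hz hzt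
  have key : ‖v z‖ * ‖wirtingerDBar v z‖ ≤ (q z + 1) / 2 * (‖v z‖ ^ 2 + ε ^ 2) := by
    have := hq0 z
    nlinarith [sq_nonneg (‖v z‖ - ‖wirtingerDBar v z‖), mul_nonneg this (sq_nonneg ε), sq_nonneg ε]
  have n0 : ‖(((‖v z‖ ^ 2 + ε ^ 2 : ℝ) : ℂ))⁻¹‖ = (‖v z‖ ^ 2 + ε ^ 2)⁻¹ := by
    rw [norm_inv, norm_real, Real.norm_of_nonneg (hDpos z).le]
  have n2 : ((starRingEnd ℂ) (v z) * wirtingerDBar v z * (((‖v z‖ ^ 2 + ε ^ 2 : ℝ) : ℂ))⁻¹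
      * wirtingerD ηc z).re ≤ (q z + 1) / 2 * ‖wirtingerDBar ηc z‖ := by
    refine (re_le_norm _).trans ?_
    rw [norm_mul, norm_mul, norm_mul, RCLike.norm_conj, hconj, RCLike.norm_conj, n0,
      ← div_eq_mul_inv]
    refine mul_le_mul_of_nonneg_right ?_ (norm_nonneg _)
    rw [div_le_iff₀ (hDpos z)]
    exact key
  have n3 : (v z * (starRingEnd ℂ) (wirtingerDBar v z) * (((‖v z‖ ^ 2 + ε ^ 2 : ℝ) : ℂ))⁻¹
      * wirtingerDBar ηc z).re ≤ (q z + 1) / 2 * ‖wirtingerDBar ηc z‖ := by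
    refine (re_le_norm _).trans ?_
    rw [norm_mul, norm_mul, norm_mul, RCLike.norm_conj, n0, ← div_eq_mul_inv]
    refine mul_le_mul_of_nonneg_right ?_ (norm_nonneg _)
    rw [div_le_iff₀ (hDpos z)]
    exact key
  have n1 : -(q z * η z) ≤ (((ε ^ 2 * (‖wirtingerD v z‖ ^ 2 - ‖wirtingerDBar v z‖ ^ 2) /
        (‖v z‖ ^ 2 + ε ^ 2) ^ 2 : ℝ) : ℂ) * ηc z).re := by
    rw [hηcdef, ← ofReal_mul, ofReal_re, ← neg_mul]
    refine mul_le_mul_of_nonneg_right ?_ (h0 z)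
    rw [le_div_iff₀ (by have := hDpos z; positivity)]
    have h5 : ε ^ 2 * ‖wirtingerDBar v z‖ ^ 2 ≤ q z * (‖v z‖ ^ 2 + ε ^ 2) ^ 2 := by
      calc ε ^ 2 * ‖wirtingerDBar v z‖ ^ 2 ≤ ε ^ 2 * (q z * ‖v z‖ ^ 2) := by gcongr
        _ = q z * (ε ^ 2 * ‖v z‖ ^ 2) := by ring
        _ ≤ q z * (‖v z‖ ^ 2 + ε ^ 2) ^ 2 := by
          have := hq0 z
          gcongr
          nlinarith [sq_nonneg (‖v z‖ ^ 2), sq_nonneg (ε ^ 2),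
            mul_nonneg (sq_nonneg ε) (sq_nonneg ‖v z‖)]
    nlinarith [mul_nonneg (sq_nonneg ε) (sq_nonneg ‖wirtingerD v z‖)]
  linarith

end LogEstimate

/-! ### Radial test functions -/

section TestFunction

lemma wirtinger_radial {g : ℝ → ℝ} {g' : ℝ} {z₁ z : ℂ} (hg : HasDerivAt g g' (‖z - z₁‖ ^ 2)) :
    wirtingerD (fun z => ((g (‖z - z₁‖ ^ 2) : ℝ) : ℂ)) z =
      (g' : ℂ) * (starRingEnd ℂ) (z - z₁) ∧
    wirtingerDBar (fun z => ((g (‖z - z₁‖ ^ 2) : ℝ) : ℂ)) z = (g' : ℂ) * (z - z₁) := by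
  have h1 : HasFDerivAt (fun z : ℂ => ‖z - z₁‖ ^ 2)
      (2 • (innerSL ℝ (z - z₁))) z := by
    have := ((hasFDerivAt_id (𝕜 := ℝ) z).sub_const z₁).norm_sq
    simpa using this
  have h2 := ofRealCLM.hasFDerivAt.comp z (hg.comp_hasFDerivAt z h1)
  have h3 (h : ℂ) : fderiv ℝ (fun z => ((g (‖z - z₁‖ ^ 2) : ℝ) : ℂ)) z h =
      ((g' * (2 * inner ℝ (z - z₁) h) : ℝ) : ℂ) := by
    refine (congrArg (fun T : ℂ →L[ℝ] ℂ => T h) h2.fderiv).trans ?_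
    simp only [ContinuousLinearMap.comp_apply, smul_apply, innerSL_apply_apply, ofRealCLM_apply,
      smul_eq_mul, nsmul_eq_mul, Nat.cast_ofNat]
  have e : z - z₁ = ((z - z₁).re : ℂ) + ((z - z₁).im : ℂ) * I := (re_add_im _).symm
  have e' : (starRingEnd ℂ) (z - z₁) = ((z - z₁).re : ℂ) - ((z - z₁).im : ℂ) * I := by
    apply Complex.ext <;> simp [neg_add_eq_sub]
  have i1 : inner ℝ (z - z₁) 1 = (z - z₁).re := by simp [Complex.inner]
  have i2 : inner ℝ (z - z₁) I = (z - z₁).im := by simp [Complex.inner, neg_add_eq_sub]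
  constructor
  · rw [wirtingerD, h3, h3, i1, i2, e']
    push_cast
    ring
  · rw [wirtingerDBar, h3, h3, i1, i2]
    conv_rhs => rw [e]
    push_cast
    ring

/-- The normalized annular weight `S'(|z - z₁|²/c - 1)/c`, where `S` is the smooth transition
function; it lives on `c ≤ |z - z₁|² ≤ 2c`. -/
def annulusWeight (z₁ : ℂ) (c : ℝ) (z : ℂ) : ℝ :=
  deriv Real.smoothTransition (‖z - z₁‖ ^ 2 / c - 1) / c

lemma contDiff_smoothTransition_deriv : ContDiff ℝ 2 (deriv Real.smoothTransition) := by
  have : ContDiff ℝ (2 + 1) Real.smoothTransition := by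
    exact_mod_cast Real.smoothTransition.contDiff (n := 3)
  exact (contDiff_succ_iff_deriv.1 this).2.2

lemma continuous_annulusWeight (z₁ : ℂ) (c : ℝ) : Continuous (annulusWeight z₁ c) := by
  have := contDiff_smoothTransition_deriv.continuous
  unfold annulusWeight
  fun_prop

lemma annulusWeight_nonneg (z₁ : ℂ) {c : ℝ} (hc : 0 < c) (z : ℂ) : 0 ≤ annulusWeight z₁ c z :=
  div_nonneg Real.smoothTransition.monotone.deriv_nonneg hc.le

lemma deriv_smoothTransition_of_lt {x : ℝ} (hx : x < 0) : deriv Real.smoothTransition x = 0 := by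
  have : Real.smoothTransition =ᶠ[𝓝 x] fun _ => 0 := by
    filter_upwards [Iio_mem_nhds hx] with y hy
    exact Real.smoothTransition.zero_of_nonpos (le_of_lt hy)
  rw [this.deriv_eq]; simp

lemma deriv_smoothTransition_of_gt {x : ℝ} (hx : 1 < x) : deriv Real.smoothTransition x = 0 := by
  have : Real.smoothTransition =ᶠ[𝓝 x] fun _ => 1 := by
    filter_upwards [Ioi_mem_nhds hx] with y hy
    exact Real.smoothTransition.one_of_one_le (le_of_lt hy)
  rw [this.deriv_eq]; simp

lemma annulusWeight_supp {z₁ : ℂ} {c : ℝ} (hc : 0 < c) {z : ℂ} (h : annulusWeight z₁ c z ≠ 0) :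
    c ≤ ‖z - z₁‖ ^ 2 ∧ ‖z - z₁‖ ^ 2 ≤ 2 * c := by
  constructor
  · by_contra! h'
    apply h
    rw [annulusWeight, deriv_smoothTransition_of_lt, zero_div]
    rw [sub_neg, div_lt_one hc]; exact h'
  · by_contra! h'
    apply h
    rw [annulusWeight, deriv_smoothTransition_of_gt, zero_div]
    rw [lt_sub_iff_add_lt, lt_div_iff₀ hc]; linarith

lemma hasCompactSupport_of_sq_bound {E : Type*} [Zero E] {f : ℂ → E} {z₁ : ℂ} {R : ℝ}
    (h : ∀ z, f z ≠ 0 → ‖z - z₁‖ ^ 2 ≤ R) :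
    HasCompactSupport f ∧ ∀ z ∈ tsupport f, ‖z - z₁‖ ^ 2 ≤ R := by
  have hcl : IsClosed {z : ℂ | ‖z - z₁‖ ^ 2 ≤ R} := isClosed_le (by fun_prop) continuous_const
  have hsub : tsupport f ⊆ {z : ℂ | ‖z - z₁‖ ^ 2 ≤ R} :=
    closure_minimal (fun z hz => h z hz) hcl
  refine ⟨?_, fun z hz => hsub hz⟩
  refine HasCompactSupport.of_support_subset_isCompact
    (isCompact_closedBall z₁ (Real.sqrt R)) fun z hz => ?_
  rw [Metric.mem_closedBall, dist_eq_norm]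
  exact Real.le_sqrt_of_sq_le (h z hz)

lemma annulusWeight_compact (z₁ : ℂ) {c : ℝ} (hc : 0 < c) :
    HasCompactSupport (annulusWeight z₁ c) :=
  (hasCompactSupport_of_sq_bound fun _ hz => (annulusWeight_supp hc hz).2).1

lemma integral_annulusWeight_pos (z₁ : ℂ) {c : ℝ} (hc : 0 < c) :
    0 < ∫ z, annulusWeight z₁ c z := by
  obtain ⟨x, hx, hd⟩ := exists_deriv_eq_slope Real.smoothTransition zero_lt_one
    Real.smoothTransition.continuous.continuousOn
    (fun y _ => ((Real.smoothTransition.contDiff (n := 1)).differentiable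
      (by simp) y).differentiableWithinAt)
  simp only [Real.smoothTransition.one, Real.smoothTransition.zero] at hd
  refine (continuous_annulusWeight z₁ c).integral_pos_of_hasCompactSupport_nonneg_nonzero
    (x := z₁ + (Real.sqrt (c * (x + 1)) : ℝ)) (annulusWeight_compact z₁ hc)
    (annulusWeight_nonneg z₁ hc) ?_
  have h1 : 0 ≤ c * (x + 1) := by have := hx.1; positivity
  have : ‖z₁ + (Real.sqrt (c * (x + 1)) : ℝ) - z₁‖ ^ 2 / c - 1 = x := by
    rw [add_sub_cancel_left, norm_real, Real.norm_eq_abs, sq_abs, Real.sq_sqrt h1]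
    field_simp; ring
  rw [annulusWeight, this, hd]
  simp [hc.ne']

/-- A nonnegative radial function `η`, supported in `|z - z₁|² ≤ 2b`, whose `∂∂̄` is the difference
of the annular weights at scales `b` and `a`. With `σ(t) = S(t/a - 1) - S(t/b - 1)` it is
`η = G(|z - z₁|²)` for `G(q) = ∫_q^{2b} σ(t)/t dt`, so that `∂∂̄η = -σ'(|z - z₁|²)`. -/
lemma exists_test_function (z₁ : ℂ) {a b : ℝ} (ha : 0 < a) (hab : a ≤ b) :
    ∃ η : ℂ → ℝ, ContDiff ℝ 2 η ∧ HasCompactSupport η ∧ (∀ z, 0 ≤ η z) ∧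
      (∀ z ∈ tsupport η, ‖z - z₁‖ ^ 2 ≤ 2 * b) ∧
      ∀ z, wirtingerD (wirtingerDBar fun z => (η z : ℂ)) z =
        ((annulusWeight z₁ b z - annulusWeight z₁ a z : ℝ) : ℂ) := by
  have hb : 0 < b := ha.trans_le hab
  set S := Real.smoothTransition with hS
  have hSc (c : ℝ) : ContDiff ℝ 2 fun t => S (t / c - 1) := by
    have : ContDiff ℝ 2 S := by exact_mod_cast Real.smoothTransition.contDiff (n := 2)
    exact this.comp (by fun_prop)
  set σ : ℝ → ℝ := fun t => S (t / a - 1) - S (t / b - 1) with hσ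
  have hσc : ContDiff ℝ 2 σ := (hSc a).sub (hSc b)
  have hz1 : ∀ c, 0 < c → ∀ t, t ≤ c → S (t / c - 1) = 0 := fun c hc t ht => by
    refine Real.smoothTransition.zero_of_nonpos ?_
    rw [sub_nonpos, div_le_one hc]; exact ht
  have hz2 : ∀ c, 0 < c → ∀ t, 2 * c ≤ t → S (t / c - 1) = 1 := fun c hc t ht => by
    refine Real.smoothTransition.one_of_one_le ?_
    rw [le_sub_iff_add_le, le_div_iff₀ hc]; linarith
  have hσ0 : ∀ t, t ≤ a → σ t = 0 := fun t ht => by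
    simp only [hσ]; rw [hz1 a ha t ht, hz1 b hb t (ht.trans hab)]; simp
  have hσ1 : ∀ t, 2 * b ≤ t → σ t = 0 := fun t ht => by
    simp only [hσ]; rw [hz2 a ha t (by linarith), hz2 b hb t ht]; simp
  have hσn : ∀ t, 0 ≤ σ t := fun t => by
    rcases le_total t 0 with ht | ht
    · rw [hσ0 t (ht.trans ha.le)]
    · exact sub_nonneg.2 (Real.smoothTransition.monotone (by gcongr))
  set τ : ℝ → ℝ := fun t => σ t / t with hτ
  have hτc : ContDiff ℝ 2 τ := by
    rw [contDiff_iff_contDiffAt]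
    intro t
    by_cases ht : t = 0
    · have : τ =ᶠ[𝓝 t] fun _ => 0 := by
        filter_upwards [Iio_mem_nhds (ht ▸ ha : t < a)] with s hs
        simp only [hτ]; rw [hσ0 s (le_of_lt hs), zero_div]
      exact contDiffAt_const.congr_of_eventuallyEq this
    · exact hσc.contDiffAt.div contDiffAt_id ht
  have hτn : ∀ t, 0 ≤ τ t := fun t => by
    rcases le_total t 0 with ht | ht
    · simp only [hτ]; rw [hσ0 t (ht.trans ha.le), zero_div]
    · exact div_nonneg (hσn t) ht
  have hτ1 : ∀ t, 2 * b ≤ t → τ t = 0 := fun t ht => by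
    simp only [hτ]; rw [hσ1 t ht, zero_div]
  have hmul : ∀ t, τ t * t = σ t := fun t => by
    by_cases ht : t = 0
    · rw [ht, mul_zero, hσ0 0 ha.le]
    · simp only [hτ]; field_simp
  set G : ℝ → ℝ := fun q => ∫ t in q..(2 * b), τ t with hG
  have hGd : ∀ q, HasDerivAt G (-τ q) q := fun q =>
    intervalIntegral.integral_hasDerivAt_left (hτc.continuous.intervalIntegrable _ _)
      hτc.continuous.stronglyMeasurable.stronglyMeasurableAtFilter hτc.continuous.continuousAt
  have hGc : ContDiff ℝ 2 G := by
    have : ContDiff ℝ (1 + 1) G := by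
      refine contDiff_succ_iff_deriv.2 ⟨fun q => (hGd q).differentiableAt, by simp, ?_⟩
      rw [show deriv G = fun q => -τ q from funext fun q => (hGd q).deriv]
      exact (hτc.of_le (by norm_num)).neg
    exact this
  have hG1 : ∀ q, 2 * b ≤ q → G q = 0 := fun q hq => by
    simp only [hG]
    rw [intervalIntegral.integral_symm, intervalIntegral.integral_congr (g := fun _ => 0)]
    · simp
    · intro t ht
      rw [Set.uIcc_of_le hq] at ht
      exact hτ1 t ht.1
  have hGn : ∀ q, 0 ≤ G q := fun q => by
    rcases le_total q (2 * b) with hq | hq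
    · exact intervalIntegral.integral_nonneg hq fun t _ => hτn t
    · rw [hG1 q hq]
  have hcs := hasCompactSupport_of_sq_bound (f := fun z => G (‖z - z₁‖ ^ 2)) (z₁ := z₁)
    (R := 2 * b) fun z hz => by
      by_contra! h
      exact hz (hG1 _ h.le)
  refine ⟨fun z => G (‖z - z₁‖ ^ 2), ?_, hcs.1, fun z => hGn _, hcs.2, fun z => ?_⟩
  · exact hGc.comp ((contDiff_id.sub contDiff_const).norm_sq ℝ)
  · have e1 : (wirtingerDBar fun z => ((G (‖z - z₁‖ ^ 2) : ℝ) : ℂ)) =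
        fun z => (((-τ (‖z - z₁‖ ^ 2) : ℝ)) : ℂ) * (z - z₁) :=
      funext fun z => (wirtinger_radial (hGd _)).2
    have hτd : ∀ q, HasDerivAt (fun t => -τ t) (-deriv τ q) q := fun q =>
      (hτc.differentiable (by norm_num) q).hasDerivAt.neg
    have d1 : DifferentiableAt ℝ (fun z => (((-τ (‖z - z₁‖ ^ 2) : ℝ)) : ℂ)) z := by
      have : ContDiff ℝ 2 (fun z => (((-τ (‖z - z₁‖ ^ 2) : ℝ)) : ℂ)) :=
        ofRealCLM.contDiff.comp
          ((hτc.neg).comp ((contDiff_id.sub contDiff_const).norm_sq ℝ))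
      exact this.differentiable (by norm_num) z
    have d2 : DifferentiableAt ℝ (fun z : ℂ => z - z₁) z := by fun_prop
    have e2 : wirtingerD (fun z : ℂ => z - z₁) z = 1 := by
      have : fderiv ℝ (fun z : ℂ => z - z₁) z = ContinuousLinearMap.id ℝ ℂ := by
        rw [fderiv_sub_const]; exact fderiv_id
      simp [wirtingerD, this]
    have hσd : deriv σ (‖z - z₁‖ ^ 2) =
        deriv τ (‖z - z₁‖ ^ 2) * ‖z - z₁‖ ^ 2 + τ (‖z - z₁‖ ^ 2) := by
      have := (hτc.differentiable (by norm_num) (‖z - z₁‖ ^ 2)).hasDerivAt.mul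
        (hasDerivAt_id (‖z - z₁‖ ^ 2))
      have h2 : τ * id = σ := funext hmul
      rw [h2] at this
      simpa using this.deriv
    have hσd2 : deriv σ (‖z - z₁‖ ^ 2) = annulusWeight z₁ a z - annulusWeight z₁ b z := by
      have hd (c : ℝ) : HasDerivAt (fun t => S (t / c - 1)) (annulusWeight z₁ c z)
          (‖z - z₁‖ ^ 2) := by
        have h1 : DifferentiableAt ℝ S (‖z - z₁‖ ^ 2 / c - 1) :=
          (Real.smoothTransition.contDiff (n := 1)).differentiable (by simp) _
        have h2 : HasDerivAt (fun t : ℝ => t / c - 1) (1 / c) (‖z - z₁‖ ^ 2) :=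
          ((hasDerivAt_id _).div_const c).sub_const 1
        have := h1.hasDerivAt.comp (‖z - z₁‖ ^ 2) h2
        rw [mul_one_div] at this
        exact this
      exact ((hd a).sub (hd b)).deriv
    rw [e1, wirtingerD_mul d1 d2, e2, (wirtinger_radial (hτd _)).1]
    have h5 : (starRingEnd ℂ) (z - z₁) * (z - z₁) = ((‖z - z₁‖ ^ 2 : ℝ) : ℂ) := by
      rw [mul_comm, mul_conj, normSq_eq_norm_sq]
    rw [mul_assoc, h5, ← neg_sub (annulusWeight z₁ a z), ← hσd2, hσd]
    push_cast
    ring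

/-- Both annular weights have the same mass, being the two halves of an exact expression. -/
lemma integral_annulusWeight_eq (z₁ : ℂ) {a b : ℝ} (ha : 0 < a) (hab : a ≤ b) :
    ∫ z, annulusWeight z₁ a z = ∫ z, annulusWeight z₁ b z := by
  obtain ⟨η, hη, hc, -, -, hw⟩ := exists_test_function z₁ ha hab
  have hηc : ContDiff ℝ 2 (fun z => (η z : ℂ)) := ofRealCLM.contDiff.comp hη
  have hcc : HasCompactSupport (fun z => (η z : ℂ)) := hc.comp_left (g := ofReal) (by simp)
  have h1 := integral_mul_wirtingerD (f := fun _ => 1) contDiff_const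
    (contDiff_wirtingerDBar (m := 1) hηc (by norm_num)) (hasCompactSupport_wirtingerDBar hcc)
  have h2 : ∀ z, wirtingerD (fun _ => (1 : ℂ)) z = 0 := fun z => by simp [wirtingerD]
  simp only [hw, h2, one_mul, zero_mul, integral_zero, neg_zero] at h1
  rw [integral_complex_ofReal, integral_sub] at h1
  · have := ofReal_eq_zero.1 h1
    linarith
  · exact (continuous_annulusWeight z₁ b).integrable_of_hasCompactSupport
      (annulusWeight_compact z₁ (ha.trans_le hab))
  · exact (continuous_annulusWeight z₁ a).integrable_of_hasCompactSupport
      (annulusWeight_compact z₁ ha)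

end TestFunction

/-! ### Flatness forces a non-integrable quotient -/

section Contradiction

/-- At almost every zero of `F` the derivative of `F` vanishes as well, since almost every point of
the zero set is a density point of it. -/
lemma ae_fderiv_eq_zero {F : ℂ → ℂ} (hF : Differentiable ℝ F) :
    ∀ᵐ z, F z = 0 → fderiv ℝ F z = 0 := by
  have hs : MeasurableSet {z | F z = 0} :=
    (isClosed_eq hF.continuous continuous_const).measurableSet
  have hA : ApproximatesLinearOn F (0 : ℂ →L[ℝ] ℂ) {z | F z = 0} 0 := by
    intro x hx y hy
    replace hx : F x = 0 := hx
    replace hy : F y = 0 := hy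
    simp [hx, hy]
  have := hA.norm_fderiv_sub_le volume hs (fun z => fderiv ℝ F z)
    fun z _ => (hF z).hasFDerivAt.hasFDerivWithinAt
  rw [ae_restrict_iff' hs] at this
  filter_upwards [this] with z hz h0
  simpa using hz h0

/-- Dividing by a power of `z - z₀` does not increase the quotient `|∂̄F|² / |F|²`. At zeros of `F`,
where the quotient is `0` by convention, the bound holds since `∂̄F` vanishes almost everywhere on
the zero set. -/
lemma ae_wirtingerDBar_div {F : ℂ → ℂ} (hF : Differentiable ℝ F) (z₀ : ℂ) (N : ℕ) :
    ∀ᵐ z, ‖wirtingerDBar (fun z => ((z - z₀) ^ N)⁻¹ • F z) z‖ ^ 2 ≤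
      ‖wirtingerDBar F z‖ ^ 2 / ‖F z‖ ^ 2 * ‖((z - z₀) ^ N)⁻¹ • F z‖ ^ 2 := by
  have hne : ∀ᵐ z : ℂ, z ≠ z₀ := by
    rw [ae_iff]; simp
  filter_upwards [ae_fderiv_eq_zero hF, hne] with z hz hz₀
  have hd : DifferentiableAt ℂ (fun z => ((z - z₀) ^ N)⁻¹) z :=
    DifferentiableAt.inv (by fun_prop) (pow_ne_zero _ (sub_ne_zero.2 hz₀))
  have h1 : wirtingerDBar (fun z => ((z - z₀) ^ N)⁻¹ • F z) z =
      ((z - z₀) ^ N)⁻¹ * wirtingerDBar F z := by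
    have := wirtingerDBar_mul (hd.restrictScalars ℝ) (hF z)
    rw [wirtingerDBar_eq_zero_of_differentiableAt hd, zero_mul, zero_add] at this
    simpa only [smul_eq_mul] using this
  rw [h1, smul_eq_mul, norm_mul, norm_mul]
  by_cases h0 : F z = 0
  · have : wirtingerDBar F z = 0 := by simp [wirtingerDBar, hz h0]
    simp [this]
  · have : ‖F z‖ ≠ 0 := norm_ne_zero_iff.2 h0
    refine le_of_eq ?_
    field_simp

/-- If `F` is smooth, flat at `z₀` and nonzero at a nearby point `z₁`, then `|∂̄F|² / |F|²` is not
integrable near `z₀`. Indeed, `log (|v|² + ε²)` for `v = F / (z - z₀)^N` is subharmonic up to an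
error independent of `N` and `ε`, but its mean near `z₁` exceeds its mean over an annulus around
`z₁` enclosing `z₀` by about `2 N log (3/2)`. -/
lemma flat_not_integrableOn {F : ℂ → ℂ} (hF : ContDiff ℝ ∞ F) {z₀ z₁ : ℂ} (hflat : Flat F z₀)
    (hz₁ : z₁ ≠ z₀) {ρ : ℝ} (hρ : 7 * ‖z₁ - z₀‖ < ρ) (hFz₁ : F z₁ ≠ 0) :
    ¬ IntegrableOn (fun z => ‖wirtingerDBar F z‖ ^ 2 / ‖F z‖ ^ 2) (Metric.ball z₀ ρ) := by
  intro hInteg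
  have hFd : Differentiable ℝ F := hF.differentiable (by simp)
  set d := ‖z₁ - z₀‖ with hd
  have hdpos : 0 < d := norm_pos_iff.2 (sub_ne_zero.2 hz₁)
  -- a lower bound for `F` near `z₁` and an upper bound on the ball
  set c := ‖F z₁‖ / 2 with hc
  have hcpos : 0 < c := by have := norm_pos_iff.2 hFz₁; positivity
  obtain ⟨r, hr, hrc⟩ : ∃ r > 0, ∀ z, ‖z - z₁‖ < r → c ≤ ‖F z‖ := by
    have : ∀ᶠ z in 𝓝 z₁, c < ‖F z‖ :=
      hF.continuous.norm.continuousAt.eventually_const_lt (by simp only [hc]; linarith)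
    obtain ⟨r, hr, h⟩ := Metric.eventually_nhds_iff.1 this
    exact ⟨r, hr, fun z hz => (h (by rwa [dist_eq_norm])).le⟩
  obtain ⟨M₀, hM₀⟩ := (isCompact_closedBall z₀ ρ).exists_bound_of_continuousOn
    hF.continuous.continuousOn
  set M := max M₀ 1 with hM
  have hMpos : 0 < M := lt_of_lt_of_le one_pos (le_max_right _ _)
  have hFM : ∀ z, ‖z - z₀‖ ≤ ρ → ‖F z‖ ≤ M := fun z hz =>
    (hM₀ z (by rwa [Metric.mem_closedBall, dist_eq_norm])).trans (le_max_left _ _)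
  set a := min (d ^ 2 / 2) (r ^ 2 / 4) with ha
  have hapos : 0 < a := lt_min (by positivity) (by positivity)
  have ha1 : 2 * a ≤ d ^ 2 := by have := min_le_left (d ^ 2 / 2) (r ^ 2 / 4); linarith
  have ha2 : 2 * a < r ^ 2 := by
    have := min_le_right (d ^ 2 / 2) (r ^ 2 / 4)
    have : 0 < r ^ 2 := by positivity
    linarith
  set b := 16 * d ^ 2 with hb
  have hbpos : 0 < b := by positivity
  have hab : a ≤ b := by
    have : 0 < d ^ 2 := by positivity
    linarith
  have hinside : ∀ z, ‖z - z₁‖ ^ 2 ≤ 2 * b → ‖z - z₀‖ < ρ := fun z hz => by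
    have h1 : ‖z - z₁‖ ≤ 6 * d := by
      refine abs_le_of_sq_le_sq' ?_ (by positivity) |>.2
      nlinarith
    have h2 : ‖z - z₀‖ ≤ ‖z - z₁‖ + ‖z₁ - z₀‖ := norm_sub_le_norm_sub_add_norm_sub _ _ _
    linarith
  obtain ⟨η, hη, hηc, hη0, hηs, hηw⟩ := exists_test_function z₁ hapos hab
  set wa := annulusWeight z₁ a with hwa
  set wb := annulusWeight z₁ b with hwb
  set p := ∫ z, wa z with hp
  have hpb : ∫ z, wb z = p := (integral_annulusWeight_eq z₁ hapos hab).symm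
  have hppos : 0 < p := integral_annulusWeight_pos z₁ hapos
  have hηcc : HasCompactSupport (fun z => (η z : ℂ)) := hηc.comp_left (g := ofReal) (by simp)
  have hηC : ContDiff ℝ 2 (fun z => (η z : ℂ)) := ofRealCLM.contDiff.comp hη
  have cηB : Continuous (wirtingerDBar fun z => (η z : ℂ)) :=
    (contDiff_wirtingerDBar (m := 0) hηC (by norm_num)).continuous
  have hcB := hasCompactSupport_wirtingerDBar hηcc
  -- the weight `q` bounding the error terms
  set q : ℂ → ℝ := (Metric.ball z₀ ρ).indicator
    (fun z => ‖wirtingerDBar F z‖ ^ 2 / ‖F z‖ ^ 2) with hq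
  have hq0 : ∀ z, 0 ≤ q z := fun z => Set.indicator_nonneg (fun _ _ => by positivity) z
  have hqint : Integrable q := (integrable_indicator_iff Metric.isOpen_ball.measurableSet).2 hInteg
  have hEint : Integrable fun z =>
      q z * η z + (q z + 1) * ‖wirtingerDBar (fun z => (η z : ℂ)) z‖ := by
    obtain ⟨C1, hC1⟩ := hηc.exists_bound_of_continuous hη.continuous
    obtain ⟨C2, hC2⟩ := hcB.norm.exists_bound_of_continuous cηB.norm
    have j1 := hqint.mul_bdd (c := C1) hη.continuous.aestronglyMeasurable (ae_of_all _ hC1)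
    have j2 := hqint.mul_bdd (c := C2) cηB.norm.aestronglyMeasurable (ae_of_all _ hC2)
    have j3 : Integrable fun z => ‖wirtingerDBar (fun z => (η z : ℂ)) z‖ :=
      cηB.norm.integrable_of_hasCompactSupport hcB.norm
    refine (j1.add (j2.add j3)).congr (ae_of_all _ fun z => ?_)
    simp only [Pi.add_apply]
    ring
  set C₀ := ∫ z, (q z * η z + (q z + 1) * ‖wirtingerDBar (fun z => (η z : ℂ)) z‖) with hC₀
  have main : ∀ N : ℕ, -C₀ ≤ p * (Real.log (2 * M ^ 2 / c ^ 2) + N * Real.log (4 / 9)) := by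
    intro N
    set v : ℂ → ℂ := fun z => ((z - z₀) ^ N)⁻¹ • F z with hv
    have hvC : ContDiff ℝ 2 v := by exact_mod_cast hflat.contDiff_div 2 N hF
    set ε := M / (3 * d) ^ N with hε
    have hεpos : 0 < ε := by positivity
    set κ := c / (2 * d) ^ N with hκ
    have hκpos : 0 < κ := by positivity
    have hvn : ∀ z, ‖v z‖ = ‖F z‖ / ‖z - z₀‖ ^ N := fun z => by
      simp only [hv, norm_smul, norm_inv, norm_pow]
      rw [div_eq_inv_mul]
    set Lg : ℂ → ℝ := fun z => Real.log (‖v z‖ ^ 2 + ε ^ 2) with hLg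
    have cL : Continuous Lg := by
      have := hvC.continuous
      exact Continuous.log (by fun_prop) fun z => by positivity
    have est := log_estimate hvC hη hηc hη0 hεpos hq0 (by
      filter_upwards [ae_wirtingerDBar_div hFd z₀ N] with z hz hzs
      have hzb : z ∈ Metric.ball z₀ ρ := by
        rw [Metric.mem_ball, dist_eq_norm]; exact hinside z (hηs z hzs)
      rw [hq, Set.indicator_of_mem hzb]
      exact hz) hEint
    simp only [hηw, ← ofReal_mul] at est
    rw [integral_complex_ofReal, ofReal_re] at est
    have ja : Integrable fun z => Lg z * wa z :=
      (cL.mul (continuous_annulusWeight z₁ a)).integrable_of_hasCompactSupport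
        (annulusWeight_compact z₁ hapos).mul_left
    have jb : Integrable fun z => Lg z * wb z :=
      (cL.mul (continuous_annulusWeight z₁ b)).integrable_of_hasCompactSupport
        (annulusWeight_compact z₁ hbpos).mul_left
    have ja' : Integrable wa := (continuous_annulusWeight z₁ a).integrable_of_hasCompactSupport
        (annulusWeight_compact z₁ hapos)
    have jb' : Integrable wb := (continuous_annulusWeight z₁ b).integrable_of_hasCompactSupport
        (annulusWeight_compact z₁ hbpos)
    have e1 : ∫ z, Real.log (‖v z‖ ^ 2 + ε ^ 2) * (wb z - wa z) =
        (∫ z, Lg z * wb z) - ∫ z, Lg z * wa z := by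
      rw [← integral_sub jb ja]
      refine integral_congr_ae (ae_of_all _ fun z => ?_)
      simp only [hLg]; ring
    have e2 : ∫ z, Lg z * wb z ≤ Real.log (2 * ε ^ 2) * p := by
      rw [← hpb, ← integral_const_mul]
      refine integral_mono jb (jb'.const_mul _) fun z => ?_
      by_cases hz : wb z = 0
      · simp [hz]
      obtain ⟨h1, h2⟩ := annulusWeight_supp hbpos hz
      refine mul_le_mul_of_nonneg_right ?_ (annulusWeight_nonneg z₁ hbpos z)
      have h3 : 4 * d ≤ ‖z - z₁‖ := by
        refine abs_le_of_sq_le_sq' ?_ (norm_nonneg _) |>.2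
        nlinarith
      have h4 : 3 * d ≤ ‖z - z₀‖ := by
        have : ‖z - z₁‖ ≤ ‖z - z₀‖ + ‖z₀ - z₁‖ := norm_sub_le_norm_sub_add_norm_sub _ _ _
        rw [norm_sub_rev z₀ z₁] at this
        linarith
      have h5 : ‖v z‖ ≤ ε := by
        rw [hvn, hε]
        gcongr
        exact hFM z (hinside z h2).le
      refine Real.log_le_log (by positivity) ?_
      have : ‖v z‖ ^ 2 ≤ ε ^ 2 := by gcongr
      linarith
    have e3 : Real.log (κ ^ 2) * p ≤ ∫ z, Lg z * wa z := by
      rw [hp, ← integral_const_mul]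
      refine integral_mono (ja'.const_mul _) ja fun z => ?_
      by_cases hz : wa z = 0
      · simp [hz]
      obtain ⟨h1, h2⟩ := annulusWeight_supp hapos hz
      refine mul_le_mul_of_nonneg_right ?_ (annulusWeight_nonneg z₁ hapos z)
      have h3 : ‖z - z₁‖ ≤ d := abs_le_of_sq_le_sq' (h2.trans ha1) hdpos.le |>.2
      have h3' : ‖z - z₁‖ < r := abs_lt_of_sq_lt_sq' (h2.trans_lt ha2) hr.le |>.2
      have h4 : ‖z - z₀‖ ≤ 2 * d := by
        have : ‖z - z₀‖ ≤ ‖z - z₁‖ + ‖z₁ - z₀‖ := norm_sub_le_norm_sub_add_norm_sub _ _ _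
        linarith
      have h6 := hrc z h3'
      -- `F z₀ = 0`, so `z ≠ z₀` and `v z` is a genuine quotient
      have h7 : 0 < ‖z - z₀‖ := by
        rw [norm_pos_iff, sub_ne_zero]
        rintro rfl
        rw [hflat.apply_eq_zero, norm_zero] at h6
        linarith
      have h5 : κ ≤ ‖v z‖ := by
        rw [hvn, hκ]
        gcongr
      refine Real.log_le_log (by positivity) ?_
      have : κ ^ 2 ≤ ‖v z‖ ^ 2 := by gcongr
      have : 0 < ε ^ 2 := by positivity
      linarith
    have e4 : Real.log (2 * ε ^ 2) - Real.log (κ ^ 2) =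
        Real.log (2 * M ^ 2 / c ^ 2) + N * Real.log (4 / 9) := by
      rw [← Real.log_div (by positivity) (by positivity), ← Real.log_pow,
        ← Real.log_mul (by positivity) (by positivity)]
      congr 1
      rw [hε, hκ, show (4 / 9 : ℝ) = (2 / 3) ^ 2 by norm_num, ← pow_mul, mul_comm 2 N, pow_mul,
        div_pow 2 3 N, mul_pow, mul_pow]
      field_simp
    rw [e1] at est
    rw [← e4]
    nlinarith
  have hlog : Real.log (4 / 9) < 0 := Real.log_neg (by norm_num) (by norm_num)
  obtain ⟨N, hN⟩ := exists_nat_gt ((C₀ / p + Real.log (2 * M ^ 2 / c ^ 2)) / (-Real.log (4 / 9)))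
  rw [div_lt_iff₀ (by linarith)] at hN
  have h1 := main N
  have h2 : C₀ = p * (C₀ / p) := by field_simp
  rw [h2] at h1
  nlinarith

end Contradiction

/-! ### Localization to a smooth function on the plane -/

section Localization

lemma exists_global_extension {W : Set ℂ} (hW : IsOpen W) {z₀ : ℂ} (hz₀ : z₀ ∈ W) {f : ℂ → ℂ}
    (hf : ContDiffOn ℝ ∞ f W) :
    ∃ F : ℂ → ℂ, ContDiff ℝ ∞ F ∧ ∃ ρ > 0, Metric.ball z₀ ρ ⊆ W ∧
      Set.EqOn F f (Metric.ball z₀ ρ) := by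
  obtain ⟨ρ, hρ, hρW⟩ := Metric.nhds_basis_closedBall.mem_iff.1 (hW.mem_nhds hz₀)
  let χ : ContDiffBump z₀ := ⟨ρ / 2, ρ, by linarith, by linarith⟩
  refine ⟨fun z => (χ z : ℝ) • f z, ?_, ρ / 2, by linarith, ?_, ?_⟩
  · rw [contDiff_iff_contDiffAt]
    intro z
    by_cases hz : z ∈ tsupport χ
    · rw [χ.tsupport_eq] at hz
      exact χ.contDiff.contDiffAt.smul (hf.contDiffAt (hW.mem_nhds (hρW hz)))
    · have : (fun z => (χ z : ℝ) • f z) =ᶠ[𝓝 z] fun _ => 0 := by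
        filter_upwards [notMem_tsupport_iff_eventuallyEq.1 hz] with y hy
        rw [hy]; simp
      exact contDiffAt_const.congr_of_eventuallyEq this
  · exact (Metric.ball_subset_closedBall.trans
      (Metric.closedBall_subset_closedBall (by linarith))).trans hρW
  · intro z hz
    have : χ z = 1 := χ.one_of_mem_closedBall (Metric.ball_subset_closedBall hz)
    simp [this]

lemma wirtingerDBar_congr {F f : ℂ → ℂ} {s : Set ℂ} (hs : IsOpen s) (h : Set.EqOn F f s) :
    Set.EqOn (wirtingerDBar F) (wirtingerDBar f) s := by
  intro z hz
  have : F =ᶠ[𝓝 z] f := h.eventuallyEq_of_mem (hs.mem_nhds hz)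
  simp only [wirtingerDBar, this.fderiv_eq]

/-- By continuity, all derivatives of `∂̄F` vanish at a point of the closure of an open set on
which `F` is holomorphic. -/
lemma flat_wirtingerDBar {F : ℂ → ℂ} (hF : ContDiff ℝ ∞ F) {s : Set ℂ} (hs : IsOpen s) {z₀ : ℂ}
    (hz₀ : z₀ ∈ closure s) (h : DifferentiableOn ℂ F s) : Flat (wirtingerDBar F) z₀ := by
  intro n
  have hB : ContDiff ℝ ∞ (wirtingerDBar F) := contDiff_wirtingerDBar hF (by simp)
  have hcl : IsClosed {z | iteratedFDeriv ℝ n (wirtingerDBar F) z = 0} :=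
    isClosed_eq (hB.continuous_iteratedFDeriv (by exact_mod_cast le_top)) continuous_const
  refine closure_minimal (fun z hz => ?_) hcl hz₀
  have h0 : wirtingerDBar F =ᶠ[𝓝 z] fun _ => 0 := by
    filter_upwards [hs.mem_nhds hz] with y hy
    exact wirtingerDBar_eq_zero_of_differentiableAt (h.differentiableAt (hs.mem_nhds hy))
  have := (h0.iteratedFDeriv ℝ n).eq_of_nhds
  rw [iteratedFDeriv_fun_zero] at this
  exact this

lemma exists_ne_zero_near {Ω : Set ℂ} (hΩ : IsOpen Ω) (hconn : IsPreconnected Ω) {u : ℂ → ℂ}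
    (hu : DifferentiableOn ℂ u Ω) (hnonconst : ¬ ∃ c : ℂ, Set.EqOn u (fun _ => c) Ω) {z₀ : ℂ}
    (hz₀ : z₀ ∈ closure Ω) {δ : ℝ} (hδ : 0 < δ) : ∃ z ∈ Metric.ball z₀ δ ∩ Ω, u z ≠ 0 := by
  by_contra! h
  obtain ⟨y, hy⟩ := mem_closure_iff_nhds.1 hz₀ _ (Metric.ball_mem_nhds z₀ hδ)
  refine hnonconst ⟨0, (hu.analyticOnNhd hΩ).eqOn_of_preconnected_of_eventuallyEq
    analyticOnNhd_const hconn hy.2 ?_⟩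
  filter_upwards [(Metric.isOpen_ball.inter hΩ).mem_nhds hy] with z hz
  exact h z hz

end Localization

/-! ### The two cases -/

section Cases

lemma volume_real_ball (z : ℂ) {r : ℝ} (hr : 0 ≤ r) :
    volume.real (Metric.ball z r) = r ^ 2 * Real.pi := by
  rw [Measure.real, Complex.volume_ball, ENNReal.toReal_mul, ENNReal.toReal_pow,
    ENNReal.toReal_ofReal hr]
  simp

lemma lintegral_ratio_lt_top {f : ℂ → ℂ} {z₀ : ℂ} {δ C : ℝ}
    (h : ∀ z ∈ Metric.ball z₀ δ, ‖wirtingerDBar f z‖ ≤ C * ‖f z‖) :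
    ∫⁻ z in Metric.ball z₀ δ, ENNReal.ofReal (‖wirtingerDBar f z‖ ^ 2 / ‖f z‖ ^ 2) < ⊤ := by
  calc _ ≤ ∫⁻ _ in Metric.ball z₀ δ, ENNReal.ofReal (C ^ 2) := by
        refine setLIntegral_mono' Metric.isOpen_ball.measurableSet fun z hz => ?_
        refine ENNReal.ofReal_le_ofReal (div_le_of_le_mul₀ (by positivity) (by positivity) ?_)
        rw [← mul_pow]
        exact pow_le_pow_left₀ (norm_nonneg _) (h z hz) 2
    _ < ⊤ := by
        rw [setLIntegral_const]
        exact ENNReal.mul_lt_top ENNReal.ofReal_lt_top measure_ball_lt_top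

lemma vanishes_of_flat {F f : ℂ → ℂ} (hF : ContDiff ℝ ∞ F) {z₀ : ℂ} (hflat : Flat F z₀) {ρ : ℝ}
    (hρ : 0 < ρ) (hFf : Set.EqOn F f (Metric.ball z₀ ρ)) : VanishesInfiniteOrder f z₀ := by
  intro m hm
  set k := ⌈m⌉₊ with hk
  have hkm : m ≤ k := Nat.le_ceil m
  obtain ⟨C, hC⟩ := (hflat.isBigO k hF).bound
  obtain ⟨δ, hδ, hδC⟩ := Metric.eventually_nhds_iff.1 hC
  have hlim : Tendsto (fun r : ℝ => C ^ 2 * Real.pi * r) (𝓝[>] 0) (𝓝 0) := by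
    have : Tendsto (fun r : ℝ => C ^ 2 * Real.pi * r) (𝓝 0) (𝓝 (C ^ 2 * Real.pi * 0)) :=
      (by fun_prop : Continuous fun r : ℝ => C ^ 2 * Real.pi * r).tendsto 0
    rw [mul_zero] at this
    exact this.mono_left nhdsWithin_le_nhds
  refine squeeze_zero_norm' ?_ hlim
  filter_upwards [self_mem_nhdsWithin, mem_nhdsWithin_of_mem_nhds (Iio_mem_nhds hδ),
    mem_nhdsWithin_of_mem_nhds (Iio_mem_nhds hρ),
    mem_nhdsWithin_of_mem_nhds (Iio_mem_nhds one_pos)] with r hr hrδ hrρ hr1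
  replace hr : 0 < r := hr
  replace hrδ : r < δ := hrδ
  replace hrρ : r < ρ := hrρ
  replace hr1 : r < 1 := hr1
  have h1 : ‖∫ z in Metric.ball z₀ r, ‖f z‖ ^ 2‖ ≤
      (C ^ 2 * r ^ (2 * k)) * volume.real (Metric.ball z₀ r) := by
    refine norm_setIntegral_le_of_norm_le_const measure_ball_lt_top fun z hz => ?_
    rw [Metric.mem_ball] at hz
    rw [← hFf (Metric.mem_ball.2 (hz.trans hrρ)), Real.norm_of_nonneg (by positivity)]
    have h2 := hδC (hz.trans hrδ)
    rw [norm_pow, norm_norm] at h2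
    rw [dist_eq_norm] at hz
    calc ‖F z‖ ^ 2 ≤ (C * ‖z - z₀‖ ^ k) ^ 2 := pow_le_pow_left₀ (norm_nonneg _) h2 2
      _ = C ^ 2 * ‖z - z₀‖ ^ (2 * k) := by ring
      _ ≤ C ^ 2 * r ^ (2 * k) := by gcongr
  rw [volume_real_ball z₀ hr.le] at h1
  rw [norm_mul, Real.norm_of_nonneg (by positivity)]
  have h3 : r ^ (-m) * (r ^ (2 * k) * r ^ 2) ≤ r := by
    rw [← pow_add, ← Real.rpow_natCast, ← Real.rpow_add hr]
    conv_rhs => rw [← Real.rpow_one r]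
    refine Real.rpow_le_rpow_of_exponent_ge hr hr1.le ?_
    push_cast
    linarith
  calc r ^ (-m) * ‖∫ z in Metric.ball z₀ r, ‖f z‖ ^ 2‖
      ≤ r ^ (-m) * (C ^ 2 * r ^ (2 * k) * (r ^ 2 * Real.pi)) := by gcongr
    _ = C ^ 2 * Real.pi * (r ^ (-m) * (r ^ (2 * k) * r ^ 2)) := by ring
    _ ≤ C ^ 2 * Real.pi * r := by gcongr

lemma lower_bound_of_leading_term {F : ℂ → ℂ} {z₀ c : ℂ} {k : ℕ} (hc : c ≠ 0)
    (h : (fun z => F z - c * (z - z₀) ^ k) =O[𝓝 z₀] fun z => ‖z - z₀‖ ^ (k + 1)) :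
    ∀ᶠ z in 𝓝 z₀, ‖c‖ / 2 * ‖z - z₀‖ ^ k ≤ ‖F z‖ := by
  have hcpos : 0 < ‖c‖ := norm_pos_iff.2 hc
  obtain ⟨C, hC⟩ := h.bound
  have hsmall : ∀ᶠ z in 𝓝 z₀, C * ‖z - z₀‖ < ‖c‖ / 2 := by
    have : Continuous fun z : ℂ => C * ‖z - z₀‖ := by fun_prop
    refine this.continuousAt.eventually_lt_const ?_
    simpa using hcpos
  filter_upwards [hC, hsmall] with z hz hs
  rw [norm_pow, norm_norm, pow_succ] at hz
  have h1 : ‖c * (z - z₀) ^ k‖ ≤ ‖F z‖ + ‖F z - c * (z - z₀) ^ k‖ := by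
    have := norm_sub_le (F z) (F z - c * (z - z₀) ^ k)
    rwa [sub_sub_cancel] at this
  rw [norm_mul, norm_pow] at h1
  have h2 : C * (‖z - z₀‖ ^ k * ‖z - z₀‖) ≤ ‖c‖ / 2 * ‖z - z₀‖ ^ k := by
    calc C * (‖z - z₀‖ ^ k * ‖z - z₀‖) = (C * ‖z - z₀‖) * ‖z - z₀‖ ^ k := by ring
      _ ≤ _ := by gcongr
  linarith

lemma not_vanishes_of_lower_bound {F f : ℂ → ℂ} (hF : Continuous F) {z₀ : ℂ} {c δ : ℝ} {k : ℕ}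
    (hc : 0 < c) (hδ : 0 < δ) (hlow : ∀ z ∈ Metric.ball z₀ δ, c * ‖z - z₀‖ ^ k ≤ ‖F z‖)
    (hFf : Set.EqOn F f (Metric.ball z₀ δ)) : ¬ VanishesInfiniteOrder f z₀ := by
  intro hv
  have hlim := hv ((2 * k + 2 : ℕ) : ℝ) (by positivity)
  set A := c ^ 2 * (1 / 4) ^ (2 * k) * ((1 / 4) ^ 2 * Real.pi) with hA
  have hApos : 0 < A := by positivity
  refine absurd (ge_of_tendsto hlim (b := A) ?_) (not_le.2 hApos)
  filter_upwards [self_mem_nhdsWithin, mem_nhdsWithin_of_mem_nhds (Iio_mem_nhds hδ)] with r hr hrδ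
  replace hr : 0 < r := hr
  replace hrδ : r < δ := hrδ
  -- the ball of radius `r/4` around `z₀ + r/2` lies in `B(z₀, r)`, at distance `≥ r/4` from `z₀`
  set w : ℂ := z₀ + ((r / 2 : ℝ) : ℂ) with hw
  have hwn : ‖w - z₀‖ = r / 2 := by
    rw [hw, add_sub_cancel_left, norm_real, Real.norm_of_nonneg (by positivity)]
  have hsub : Metric.ball w (r / 4) ⊆ Metric.ball z₀ r := by
    refine Metric.ball_subset_ball' ?_
    rw [dist_eq_norm, hwn]; linarith
  have hInteg : ∀ (x : ℂ) (s : ℝ), IntegrableOn (fun z => ‖F z‖ ^ 2) (Metric.ball x s) :=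
    fun x s => ((hF.norm.pow 2).locallyIntegrable.integrableOn_isCompact
      (isCompact_closedBall x s)).mono_set Metric.ball_subset_closedBall
  have h1 : c ^ 2 * (r / 4) ^ (2 * k) * volume.real (Metric.ball w (r / 4)) ≤
      ∫ z in Metric.ball w (r / 4), ‖F z‖ ^ 2 := by
    refine setIntegral_ge_of_const_le_real Metric.isOpen_ball.measurableSet
      measure_ball_lt_top.ne (fun z hz => ?_) (hInteg _ _)
    have hz1 := hlow z (Metric.ball_subset_ball hrδ.le (hsub hz))
    rw [Metric.mem_ball, dist_eq_norm] at hz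
    have hz2 : r / 4 ≤ ‖z - z₀‖ := by
      have : ‖w - z₀‖ ≤ ‖w - z‖ + ‖z - z₀‖ := norm_sub_le_norm_sub_add_norm_sub _ _ _
      rw [norm_sub_rev w z] at this
      linarith
    calc c ^ 2 * (r / 4) ^ (2 * k) ≤ c ^ 2 * ‖z - z₀‖ ^ (2 * k) := by gcongr
      _ = (c * ‖z - z₀‖ ^ k) ^ 2 := by ring
      _ ≤ ‖F z‖ ^ 2 := pow_le_pow_left₀ (by positivity) hz1 2
  have h2 : ∫ z in Metric.ball w (r / 4), ‖F z‖ ^ 2 ≤ ∫ z in Metric.ball z₀ r, ‖F z‖ ^ 2 :=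
    setIntegral_mono_set (hInteg _ _) (ae_of_all _ fun z => by positivity) hsub.eventuallyLE
  have h3 : ∫ z in Metric.ball z₀ r, ‖F z‖ ^ 2 = ∫ z in Metric.ball z₀ r, ‖f z‖ ^ 2 :=
    setIntegral_congr_fun Metric.isOpen_ball.measurableSet fun z hz => by
      simp only [hFf (Metric.ball_subset_ball hrδ.le hz)]
  rw [volume_real_ball w (by positivity)] at h1
  rw [Real.rpow_neg hr.le, Real.rpow_natCast, ← h3, ← div_eq_inv_mul, le_div_iff₀ (by positivity)]
  refine le_trans (le_of_eq ?_) (h1.trans h2)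
  rw [hA, show r / 4 = 1 / 4 * r by ring]
  ring

/-- In the flat case the quotient `|∂̄f|² / |f|²` has infinite integral over every neighbourhood. -/
lemma lintegral_ratio_eq_top {F f : ℂ → ℂ} (hF : ContDiff ℝ ∞ F) {z₀ : ℂ} (hflat : Flat F z₀)
    {ρ : ℝ} (hρ : 0 < ρ) (hFf : Set.EqOn F f (Metric.ball z₀ ρ))
    (hne : ∀ δ > 0, ∃ z ∈ Metric.ball z₀ δ, F z ≠ 0) {U : Set ℂ} (hU : IsOpen U) (hz₀ : z₀ ∈ U) :
    ∫⁻ z in U, ENNReal.ofReal (‖wirtingerDBar f z‖ ^ 2 / ‖f z‖ ^ 2) = ⊤ := by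
  by_contra hfin
  obtain ⟨δ₀, hδ₀, hδU⟩ := Metric.isOpen_iff.1 hU z₀ hz₀
  set δ := min δ₀ ρ with hδ
  have hδpos : 0 < δ := lt_min hδ₀ hρ
  have hsubU : Metric.ball z₀ δ ⊆ U := (Metric.ball_subset_ball (min_le_left _ _)).trans hδU
  have hFf' : Set.EqOn F f (Metric.ball z₀ δ) := hFf.mono (Metric.ball_subset_ball (min_le_right _ _))
  have hBf := wirtingerDBar_congr Metric.isOpen_ball hFf'
  obtain ⟨z₁, hz₁, hFz₁⟩ := hne (δ / 7) (by positivity)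
  have hz₁₀ : z₁ ≠ z₀ := by
    rintro rfl
    exact hFz₁ hflat.apply_eq_zero
  refine flat_not_integrableOn hF hflat hz₁₀ (ρ := δ) ?_ hFz₁ ?_
  · rw [Metric.mem_ball, dist_eq_norm] at hz₁
    linarith
  · have cB : Continuous (wirtingerDBar F) :=
      (contDiff_wirtingerDBar (m := 0) hF (by simp)).continuous
    have hmeas : Measurable fun z => ‖wirtingerDBar F z‖ ^ 2 / ‖F z‖ ^ 2 :=
      (cB.norm.pow 2).measurable.div (hF.continuous.norm.pow 2).measurable
    refine (lintegral_ofReal_ne_top_iff_integrable hmeas.aestronglyMeasurable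
      (ae_of_all _ fun z => by positivity)).1 ?_
    have e : ∫⁻ z in Metric.ball z₀ δ, ENNReal.ofReal (‖wirtingerDBar F z‖ ^ 2 / ‖F z‖ ^ 2) =
        ∫⁻ z in Metric.ball z₀ δ, ENNReal.ofReal (‖wirtingerDBar f z‖ ^ 2 / ‖f z‖ ^ 2) :=
      setLIntegral_congr_fun Metric.isOpen_ball.measurableSet fun z hz => by
        simp only [hFf' hz, hBf hz]
    rw [e]
    exact ne_top_of_le_ne_top hfin (lintegral_mono_set hsubU)

end Cases

end

/-- Corollary 5.4: for a smooth extension `ũ` across a boundary point `z₀` of a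
nonconstant holomorphic function, with `ũ(z₀) = 0`, the following are equivalent:
(1) `ũ` vanishes to infinite order at `z₀`; (2) `|∂̄ũ|/|ũ| ∉ L^∞` near `z₀`;
(3) `|∂̄ũ|/|ũ| ∉ L²` near `z₀`. -/
theorem infinite_order_characterization
    (Ω : Set ℂ) (hΩopen : IsOpen Ω) (hΩconn : IsConnected Ω)
    (z₀ : ℂ) (hz₀ : z₀ ∈ frontier Ω)
    (u : ℂ → ℂ) (hu : DifferentiableOn ℂ u Ω)
    (hnonconst : ¬ ∃ c : ℂ, Set.EqOn u (fun _ => c) Ω)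
    (W : Set ℂ) (hWopen : IsOpen W) (hz₀W : z₀ ∈ W)
    (ut : ℂ → ℂ) (hsmooth : ContDiffOn ℝ (⊤ : ℕ∞) ut W)
    (hagree : Set.EqOn ut u (W ∩ Ω)) (hut0 : ut z₀ = 0) :
    (VanishesInfiniteOrder ut z₀ ↔
      ∀ U : Set ℂ, IsOpen U → z₀ ∈ U → U ⊆ W →
        ∀ C : ℝ, ∃ z ∈ U, ¬ (‖wirtingerDBar ut z‖ ≤ C * ‖ut z‖)) ∧
    (VanishesInfiniteOrder ut z₀ ↔
      ∀ U : Set ℂ, IsOpen U → z₀ ∈ U → U ⊆ W →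
        ∫⁻ z in U, ENNReal.ofReal (‖wirtingerDBar ut z‖ ^ 2 / ‖ut z‖ ^ 2) = ⊤) := by
  obtain ⟨F, hF, ρ, hρ, hρW, hFf⟩ := exists_global_extension hWopen hz₀W hsmooth
  have hcl : z₀ ∈ closure Ω := frontier_subset_closure hz₀
  have hcl' : z₀ ∈ closure (Metric.ball z₀ ρ ∩ Ω) :=
    mem_closure_iff_nhds.2 fun t ht => by
      obtain ⟨y, hy⟩ := mem_closure_iff_nhds.1 hcl _
        (Filter.inter_mem ht (Metric.ball_mem_nhds z₀ hρ))
      exact ⟨y, hy.1.1, hy.1.2, hy.2⟩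
  have hFu : Set.EqOn F u (Metric.ball z₀ ρ ∩ Ω) := fun z hz =>
    (hFf hz.1).trans (hagree ⟨hρW hz.1, hz.2⟩)
  have hflatB : Flat (wirtingerDBar F) z₀ :=
    flat_wirtingerDBar hF (Metric.isOpen_ball.inter hΩopen) hcl'
      ((hu.mono Set.inter_subset_right).congr hFu)
  have hne : ∀ δ > 0, ∃ z ∈ Metric.ball z₀ δ, F z ≠ 0 := fun δ hδ => by
    obtain ⟨z, hz, hz0⟩ := exists_ne_zero_near hΩopen hΩconn.isPreconnected hu hnonconst hcl
      (lt_min hδ hρ)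
    refine ⟨z, Metric.ball_subset_ball (min_le_left _ _) hz.1, ?_⟩
    rwa [hFu ⟨Metric.ball_subset_ball (min_le_right _ _) hz.1, hz.2⟩]
  rcases flat_or_leading_term hF hflatB with hflat | ⟨k, c, hc, hlead⟩
  -- flat case: all three conditions hold
  · have h1 := vanishes_of_flat hF hflat hρ hFf
    have h3 : ∀ U : Set ℂ, IsOpen U → z₀ ∈ U →
        ∫⁻ z in U, ENNReal.ofReal (‖wirtingerDBar ut z‖ ^ 2 / ‖ut z‖ ^ 2) = ⊤ :=
      fun U hU hz => lintegral_ratio_eq_top hF hflat hρ hFf hne hU hz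
    refine ⟨iff_of_true h1 fun U hU hz _ C => ?_, iff_of_true h1 fun U hU hz _ => h3 U hU hz⟩
    by_contra! hbound
    obtain ⟨δ, hδ, hδU⟩ := Metric.isOpen_iff.1 hU z₀ hz
    exact (lintegral_ratio_lt_top (C := C) fun z hz => hbound z (hδU hz)).ne
      (h3 _ Metric.isOpen_ball (Metric.mem_ball_self hδ))
  -- leading term `c (z - z₀)^k`: all three conditions fail
  · obtain ⟨C, hC⟩ := (hflatB.isBigO k (contDiff_wirtingerDBar hF (by simp))).bound
    obtain ⟨δ₀, hδ₀, hδ₀'⟩ :=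
      Metric.eventually_nhds_iff.1 (hC.and (lower_bound_of_leading_term hc hlead))
    have hcpos : 0 < ‖c‖ := norm_pos_iff.2 hc
    set δ := min δ₀ ρ with hδ
    have hδpos : 0 < δ := lt_min hδ₀ hρ
    have hFf' : Set.EqOn F ut (Metric.ball z₀ δ) :=
      hFf.mono (Metric.ball_subset_ball (min_le_right _ _))
    have hBf := wirtingerDBar_congr Metric.isOpen_ball hFf'
    have hδW : Metric.ball z₀ δ ⊆ W := (Metric.ball_subset_ball (min_le_right _ _)).trans hρW
    have h1 : ¬ VanishesInfiniteOrder ut z₀ :=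
      not_vanishes_of_lower_bound hF.continuous (half_pos hcpos) hδpos
        (fun z hz => (hδ₀' (lt_of_lt_of_le hz (min_le_left _ _))).2) hFf'
    have h2 : ∀ z ∈ Metric.ball z₀ δ,
        ‖wirtingerDBar ut z‖ ≤ (|C| * (2 / ‖c‖)) * ‖ut z‖ := fun z hz => by
      obtain ⟨ha, hb⟩ := hδ₀' (lt_of_lt_of_le hz (min_le_left _ _))
      rw [norm_pow, norm_norm] at ha
      rw [← hFf' hz, ← hBf hz]
      calc ‖wirtingerDBar F z‖ ≤ C * ‖z - z₀‖ ^ k := ha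
        _ ≤ |C| * ‖z - z₀‖ ^ k := by gcongr; exact le_abs_self C
        _ = (|C| * (2 / ‖c‖)) * (‖c‖ / 2 * ‖z - z₀‖ ^ k) := by field_simp
        _ ≤ (|C| * (2 / ‖c‖)) * ‖F z‖ := by gcongr
    refine ⟨iff_of_false h1 fun h => ?_, iff_of_false h1 fun h => ?_⟩
    · obtain ⟨z, hz, hz'⟩ := h _ Metric.isOpen_ball (Metric.mem_ball_self hδpos) hδW
        (|C| * (2 / ‖c‖))
      exact hz' (h2 z hz)
    · exact (lintegral_ratio_lt_top h2).ne
        (h _ Metric.isOpen_ball (Metric.mem_ball_self hδpos) hδW)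
end

section
/- Let n ≥ 2 and 0 < ε < (n−1)/n. Define V on the open ball B_{1/2} = {x ∈ ℝⁿ : |x| < 1/2} by V(x) = ε·(−log|x|)^{ε−1}/|x| for x ≠ 0 (and V(0) = 0), and define u₀ on B_{1/2} by u₀(x) = exp(−(−log|x|)^ε) for x ≠ 0 and u₀(0) = 0. Then: (1) ∫_{B_{1/2}} V(x)ⁿ dv < ∞; (2) u₀ is continuous on B_{1/2} and C^∞ on B_{1/2} ∖ {0}; and (3) for every x ∈ B_{1/2} ∖ {0}, ‖fderiv u₀ x‖ = V(x)·u₀(x). -/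
/-!
Everything is radial. Off the origin `u₀ = g ∘ ‖·‖` with `g r = exp (-(-log r) ^ ε)`, whose
derivative at `0 < r < 1` is `g r * (ε * (-log r) ^ (ε - 1) / r)`; since the derivative of the norm has
operator norm one away from `0`, this gives smoothness and `‖∇u₀‖ = V u₀`. Continuity at the origin
holds because `(-log r) ^ ε → ∞` as `r → 0⁺`.

For the integrability of `V ^ n`, polar coordinates reduce the claim to the integrability of
`(-log r) ^ a / r` on `(0, 1/2)` with `a = n (ε - 1)`. The hypothesis `ε < (n - 1) / n` says exactly
that `a < -1`, so the antiderivative `-(-log r) ^ (a + 1) / (a + 1)` stays bounded, with limit `0`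
at `0⁺`; a nonnegative derivative of a function continuous up to the endpoints is integrable
(`integrableOn_neg_log_rpow_div`).
-/

open MeasureTheory Classical

lemma neg_log_pos {r : ℝ} (h0 : 0 < r) (h1 : r < 1) : 0 < -Real.log r :=
  neg_pos.2 (Real.log_neg h0 h1)

lemma hasDerivAt_neg_log_rpow (p : ℝ) {r : ℝ} (h0 : 0 < r) (h1 : r < 1) :
    HasDerivAt (fun s : ℝ => (-Real.log s) ^ p) (-(p * (-Real.log r) ^ (p - 1) / r)) r := by
  have h := (Real.hasDerivAt_log h0.ne').neg.rpow_const (p := p)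
    (Or.inl (neg_log_pos h0 h1).ne')
  refine h.congr_deriv ?_
  rw [Pi.neg_apply]
  field_simp

/-- The Bertrand-type integral at the origin: `(-log r) ^ a / r` is integrable near `0` when
`a < -1`. -/
lemma integrableOn_neg_log_rpow_div {a : ℝ} (ha : a < -1) :
    IntegrableOn (fun r : ℝ => (-Real.log r) ^ a / r) (Set.Ioo 0 (1 / 2)) := by
  have hderiv : ∀ r ∈ Set.Ioo (0 : ℝ) (1 / 2),
      HasDerivAt (fun s : ℝ => (-Real.log s) ^ (a + 1) / (-(a + 1))) ((-Real.log r) ^ a / r) r := by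
    intro r hr
    have h := (hasDerivAt_neg_log_rpow (a + 1) hr.1 (by linarith [hr.2])).div_const (-(a + 1))
    refine h.congr_deriv ?_
    have : a + 1 ≠ 0 := by linarith
    have hr0 := hr.1.ne'
    rw [add_sub_cancel_right]
    field_simp
  have hcont : ContinuousOn (fun s : ℝ => (-Real.log s) ^ (a + 1) / (-(a + 1)))
      (Set.Icc 0 (1 / 2)) := by
    refine ContinuousOn.div_const ?_ _
    intro r hr
    rcases hr.1.eq_or_lt with rfl | h0
    · refine ContinuousAt.continuousWithinAt ?_
      rw [continuousAt_iff_punctured_nhds]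
      -- The junk values `log 0 = 0` and `0 ^ (a + 1) = 0` give the right limit at `0`.
      have h0 : (-Real.log 0) ^ (a + 1) = 0 := by
        rw [Real.log_zero, neg_zero, Real.zero_rpow (by linarith)]
      rw [h0]
      have h := (tendsto_rpow_neg_atTop (y := -(a + 1)) (by linarith)).comp
        (Filter.tendsto_neg_atBot_atTop.comp Real.tendsto_log_nhdsNE_zero)
      simpa [Function.comp_def] using h
    · exact (hasDerivAt_neg_log_rpow _ h0 (by linarith [hr.2])).continuousAt.continuousWithinAt
  have h := intervalIntegral.integrableOn_deriv_of_nonneg hcont hderiv (fun r hr =>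
    div_nonneg (Real.rpow_nonneg (neg_log_pos hr.1 (by linarith [hr.2])).le _) hr.1.le)
  exact h.mono_set Set.Ioo_subset_Ioc_self

/-- Example 2.4: for `0 < ε < (n−1)/n`, the potential
`V(x) = ε(−log|x|)^{ε−1}/|x|` is in `Lⁿ(B_{1/2})` and the function
`u₀(x) = exp(−(−log|x|)^ε)` (with `u₀(0) = 0`) is continuous on `B_{1/2}`,
smooth away from the origin, and satisfies `|∇u₀| = V·u₀` off the origin. -/
theorem log_potential_example (n : ℕ) (hn : 2 ≤ n)
    (ε : ℝ) (hε0 : 0 < ε) (hε1 : ε < ((n : ℝ) - 1) / n)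
    (V u₀ : EuclideanSpace ℝ (Fin n) → ℝ)
    (hV : ∀ x : EuclideanSpace ℝ (Fin n),
      V x = if x = 0 then 0 else ε * (-Real.log ‖x‖) ^ (ε - 1) / ‖x‖)
    (hu : ∀ x : EuclideanSpace ℝ (Fin n),
      u₀ x = if x = 0 then 0 else Real.exp (-(-Real.log ‖x‖) ^ ε)) :
    IntegrableOn (fun x => V x ^ n) (Metric.ball 0 (1/2)) volume ∧
    ContinuousOn u₀ (Metric.ball 0 (1/2)) ∧
    ContDiffOn ℝ (⊤ : ℕ∞) u₀ (Metric.ball 0 (1/2) \ {0}) ∧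
    ∀ x ∈ Metric.ball (0 : EuclideanSpace ℝ (Fin n)) (1/2) \ {0},
      ‖fderiv ℝ u₀ x‖ = V x * u₀ x := by
  have hloc : ∀ x : EuclideanSpace ℝ (Fin n), x ≠ 0 →
      u₀ =ᶠ[nhds x] fun y => Real.exp (-(-Real.log ‖y‖) ^ ε) := by
    intro x hx
    filter_upwards [isOpen_ne.mem_nhds hx] with y hy
    rw [hu, if_neg hy]
  have hsmooth : ∀ x ∈ Metric.ball (0 : EuclideanSpace ℝ (Fin n)) (1/2) \ {0},
      ContDiffAt ℝ (⊤ : ℕ∞) u₀ x := by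
    rintro x ⟨hx, hx0⟩
    have hx0 : x ≠ 0 := hx0
    have hpos : 0 < ‖x‖ := norm_pos_iff.2 hx0
    have hlt : ‖x‖ < 1 / 2 := by simpa using hx
    refine ContDiffAt.congr_of_eventuallyEq ?_ (hloc x hx0)
    have h1 : ContDiffAt ℝ (⊤ : ℕ∞) (fun y : EuclideanSpace ℝ (Fin n) => -Real.log ‖y‖) x :=
      ((contDiffAt_norm ℝ hx0).log hpos.ne').neg
    exact (h1.rpow_const_of_ne (neg_log_pos hpos (by linarith)).ne').neg.exp
  refine ⟨?_, ?_, fun x hx => (hsmooth x hx).contDiffWithinAt, ?_⟩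
  · have : Nonempty (Fin n) := ⟨⟨0, by omega⟩⟩
    have hn0 : (0 : ℝ) < n := by exact_mod_cast (by omega : 0 < n)
    -- At the origin the formula for `V` also returns `0`, as a division by zero.
    have hVr : (fun x => V x ^ n) = fun x : EuclideanSpace ℝ (Fin n) =>
        (fun r : ℝ => (ε * (-Real.log r) ^ (ε - 1) / r) ^ n) ‖x‖ := by
      funext x
      rw [hV]
      split_ifs with h
      · simp [h]
      · rfl
    rw [hVr]
    refine (integrableOn_fun_norm_addHaar volume
      (f := fun r : ℝ => (ε * (-Real.log r) ^ (ε - 1) / r) ^ n)).2 ?_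
    have ha : (ε - 1) * n < -1 := by
      rw [lt_div_iff₀ hn0] at hε1
      linarith
    refine IntegrableOn.congr_fun
      ((integrableOn_neg_log_rpow_div ha).const_mul (ε ^ n)) ?_ measurableSet_Ioo
    intro r hr
    have hr0 := hr.1.ne'
    have hl := neg_log_pos hr.1 (by linarith [hr.2])
    obtain ⟨m, rfl⟩ : ∃ m, n = m + 1 := ⟨n - 1, by omega⟩
    simp only [finrank_euclideanSpace_fin, add_tsub_cancel_right, smul_eq_mul]
    rw [Real.rpow_mul_natCast hl.le, div_pow, mul_pow, pow_succ r]
    field_simp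
  · intro x hx
    by_cases hx0 : x = 0
    · subst hx0
      refine ContinuousAt.continuousWithinAt ?_
      rw [continuousAt_iff_punctured_nhds, hu 0, if_pos rfl]
      have hlog : Filter.Tendsto (fun y : EuclideanSpace ℝ (Fin n) => -Real.log ‖y‖)
          (nhdsWithin 0 {0}ᶜ) Filter.atTop :=
        Filter.tendsto_neg_atBot_atTop.comp
          (Real.tendsto_log_nhdsGT_zero.comp tendsto_norm_nhdsNE_zero)
      have h := Real.tendsto_exp_neg_atTop_nhds_zero.comp ((tendsto_rpow_atTop hε0).comp hlog)
      refine h.congr' ?_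
      filter_upwards [self_mem_nhdsWithin] with y hy
      rw [hu, if_neg (show y ≠ 0 from hy)]
      rfl
    · exact (hsmooth x ⟨hx, hx0⟩).continuousAt.continuousWithinAt
  · rintro x ⟨hx, hx0⟩
    have hx0 : x ≠ 0 := hx0
    have hpos : 0 < ‖x‖ := norm_pos_iff.2 hx0
    have hlt : ‖x‖ < 1 / 2 := by simpa using hx
    have hl := neg_log_pos hpos (by linarith)
    have hnorm : DifferentiableAt ℝ (fun y : EuclideanSpace ℝ (Fin n) => ‖y‖) x :=
      (contDiffAt_norm (n := 1) ℝ hx0).differentiableAt one_ne_zero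
    have hg := (hasDerivAt_neg_log_rpow ε hpos (by linarith)).neg.exp
    have hc := hg.comp_hasFDerivAt x hnorm.hasFDerivAt
    have : Nontrivial (EuclideanSpace ℝ (Fin n)) := ⟨x, 0, hx0⟩
    have hfd := ((hloc x hx0).fderiv_eq).trans hc.fderiv
    rw [hfd, norm_smul, norm_fderiv_norm hnorm, hV, hu, if_neg hx0, if_neg hx0, mul_one, neg_neg,
      Real.norm_of_nonneg (by positivity), mul_comm]
    rfl
end

section
/- Let n ≥ 2, let 1 ≤ p < n, and let 0 < ε < (n−p)/p. Define u on the open unit ball B₁ ⊆ ℝⁿ by u(x) = exp(−1/|x|^ε) for x ≠ 0 and u(0) = 0, and define V(x) = ε/|x|^{ε+1} for x ≠ 0 (V(0) = 0). Then: (1) u is C^∞ on B₁; (2) u vanishes to infinite order at 0 in the L² sense, i.e. for every m ≥ 0, lim_{r→0} r^{−m} ∫_{B(0,r)} |u|² dv = 0; (3) for every x ∈ B₁ ∖ {0}, ‖fderiv u x‖ ≤ V(x)·u(x); and (4) ∫_{B₁} V(x)^p dv < ∞. In particular, the strong unique continuation property for the differential inequality |∇u| ≤ V|u| fails in general for potentials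 V ∈ L^p with p < n. -/
/-!
The function `u` is radial: `u x = φ (‖x‖ ^ 2)` with `φ t = exp (-1 / t ^ (ε / 2))` for `t > 0` and
`φ t = 0` for `t ≤ 0`. Since `‖x‖ ^ 2` is smooth, smoothness of `u` reduces to that of `φ`. The
functions `flatPow δ a t = t ^ a * exp (-1 / t ^ δ)` (extended by `0`) satisfy
`(flatPow δ a)' = a * flatPow δ (a - 1) + δ * flatPow δ (a - δ - 1)`, also at `t = 0` because the
exponential beats every power of `t` (`tendsto_rpow_mul_exp_neg_rpow`); induction on the order of
differentiability, over all `a` at once, gives smoothness (`contDiff_flatPow`), and `φ` is the case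
`a = 0`, `δ = ε / 2`.

The same decay gives vanishing to infinite order, as `|u| ^ 2 ≤ exp (-1 / r ^ ε)` on the ball of
radius `r`. The chain rule through `‖x‖`, which is 1-Lipschitz, gives the gradient bound. Finally
`V ^ p = ε ^ p * ‖x‖ ^ (-(ε + 1) p)`, which is integrable near `0` since `(ε + 1) p < n`.
-/

open Filter Topology

open MeasureTheory Classical

/-- The factor `exp (-t ^ (-δ))` beats every power of `t` at `0⁺`: in the variable `s = t ^ (-δ)`
this is the decay of `s ^ (-a / δ) * exp (-s)` at infinity. -/
theorem tendsto_rpow_mul_exp_neg_rpow {δ : ℝ} (hδ : 0 < δ) (a : ℝ) :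
    Tendsto (fun t : ℝ => t ^ a * Real.exp (-(1 / t ^ δ))) (𝓝[>] 0) (𝓝 0) := by
  have h1 : Tendsto (fun t : ℝ => (t⁻¹) ^ δ) (𝓝[>] 0) atTop :=
    (tendsto_rpow_atTop hδ).comp tendsto_inv_nhdsGT_zero
  refine ((tendsto_rpow_mul_exp_neg_mul_atTop_nhds_zero (-a / δ) 1 one_pos).comp h1).congr' ?_
  filter_upwards [self_mem_nhdsWithin] with t ht
  have ht : 0 < t := ht
  have e1 : ((t⁻¹) ^ δ) ^ (-a / δ) = t ^ a := by
    rw [← Real.rpow_mul (inv_nonneg.2 ht.le), mul_div_cancel₀ _ hδ.ne', Real.inv_rpow ht.le,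
      Real.rpow_neg ht.le, inv_inv]
  simp only [Function.comp_apply, e1]
  simp only [Real.inv_rpow ht.le, one_div, neg_mul, one_mul]

/-- The function `t ^ a * exp (-1 / t ^ δ)` on `(0, ∞)`, extended by `0` to `(-∞, 0]`. -/
noncomputable def flatPow (δ a t : ℝ) : ℝ :=
  if t ≤ 0 then 0 else t ^ a * Real.exp (-(1 / t ^ δ))

theorem hasDerivAt_rpow_mul_exp (δ a : ℝ) {t : ℝ} (ht : 0 < t) :
    HasDerivAt (fun t : ℝ => t ^ a * Real.exp (-(1 / t ^ δ)))
      (a * (t ^ (a - 1) * Real.exp (-(1 / t ^ δ))) +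
        δ * (t ^ (a - δ - 1) * Real.exp (-(1 / t ^ δ)))) t := by
  have hd : 0 < t ^ δ := Real.rpow_pos_of_pos ht δ
  have h1 := Real.hasDerivAt_rpow_const (x := t) (p := a) (Or.inl ht.ne')
  have h2 := Real.hasDerivAt_rpow_const (x := t) (p := δ) (Or.inl ht.ne')
  have h3 := ((h2.inv hd.ne').neg).exp
  have h4 := h1.mul h3
  simp only [one_div]
  refine h4.congr_deriv ?_
  have e : t ^ (a - δ - 1) = t ^ a * (t ^ (δ - 1) / (t ^ δ) ^ 2) := by
    rw [show a - δ - 1 = a + ((δ - 1) - δ - δ) by ring, Real.rpow_add ht, Real.rpow_sub ht,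
      Real.rpow_sub ht]
    field_simp
  rw [e]
  simp only [Pi.neg_apply, Pi.inv_apply]
  ring

/-- Differentiation maps the family `flatPow δ a`, `a : ℝ`, into its own linear span; at `t = 0`
the difference quotient of `flatPow δ a` is `flatPow δ (a - 1)`, which tends to `0`. -/
theorem hasDerivAt_flatPow {δ : ℝ} (hδ : 0 < δ) (a t : ℝ) :
    HasDerivAt (flatPow δ a) (a * flatPow δ (a - 1) t + δ * flatPow δ (a - δ - 1) t) t := by
  rcases lt_trichotomy t 0 with ht | rfl | ht
  · simp only [flatPow, ht.le, if_true, mul_zero, add_zero]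
    refine (hasDerivAt_const t (0 : ℝ)).congr_of_eventuallyEq ?_
    filter_upwards [gt_mem_nhds ht] with y hy
    simp [flatPow, le_of_lt hy]
  · simp only [flatPow, le_refl, if_true, mul_zero, add_zero]
    rw [hasDerivAt_iff_tendsto_slope]
    have key : Tendsto (flatPow δ (a - 1)) (𝓝 0) (𝓝 0) := by
      unfold flatPow
      refine tendsto_const_nhds.if ?_
      simp only [not_le]
      exact tendsto_rpow_mul_exp_neg_rpow hδ (a - 1)
    refine (key.mono_left inf_le_left).congr fun y => ?_
    by_cases hy : y ≤ 0
    · simp [slope_def_field, flatPow, hy]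
    · have hy' : 0 < y := not_le.1 hy
      simp [slope_def_field, flatPow, hy, Real.rpow_sub_one hy'.ne']
      ring
  · simp only [flatPow, not_le.2 ht, if_false]
    refine (hasDerivAt_rpow_mul_exp δ a ht).congr_of_eventuallyEq ?_
    filter_upwards [lt_mem_nhds ht] with y hy
    simp [flatPow, not_le.2 hy]

theorem contDiff_flatPow {δ : ℝ} (hδ : 0 < δ) (a : ℝ) :
    ContDiff ℝ (⊤ : ℕ∞) (flatPow δ a) := by
  refine contDiff_all_iff_nat.2 (fun m => ?_) ⊤
  induction m generalizing a with
  | zero =>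
    exact contDiff_zero.2
      (continuous_iff_continuousAt.2 fun t => (hasDerivAt_flatPow hδ a t).continuousAt)
  | succ m ih =>
    rw [show ((m + 1 : ℕ) : WithTop ℕ∞) = m + 1 from rfl]
    refine contDiff_succ_iff_deriv.2
      ⟨fun t => (hasDerivAt_flatPow hδ a t).differentiableAt, by simp, ?_⟩
    rw [show deriv (flatPow δ a) =
        fun t => a * flatPow δ (a - 1) t + δ * flatPow δ (a - δ - 1) t from
      funext fun t => (hasDerivAt_flatPow hδ a t).deriv]
    exact (contDiff_const.mul (ih _)).add (contDiff_const.mul (ih _))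

/-- Example 2.5: for `1 ≤ p < n` and `0 < ε < (n−p)/p`, the function
`u(x) = exp(−1/|x|^ε)` (with `u(0) = 0`) is smooth on `B₁`, vanishes to infinite
order at `0` in the `L²` sense, and satisfies `|∇u| ≤ V·u` off the origin with
`V(x) = ε/|x|^{ε+1} ∈ L^p(B₁)`; hence strong unique continuation fails for
`L^p` potentials with `p < n`. -/
theorem failure_of_sucp_for_subcritical_potentials (n : ℕ) (hn : 2 ≤ n)
    (p : ℝ) (hp1 : 1 ≤ p) (hpn : p < n)
    (ε : ℝ) (hε0 : 0 < ε) (hε1 : ε < ((n : ℝ) - p) / p)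
    (u V : EuclideanSpace ℝ (Fin n) → ℝ)
    (hu : ∀ x : EuclideanSpace ℝ (Fin n),
      u x = if x = 0 then 0 else Real.exp (-(1 / ‖x‖ ^ ε)))
    (hV : ∀ x : EuclideanSpace ℝ (Fin n),
      V x = if x = 0 then 0 else ε / ‖x‖ ^ (ε + 1)) :
    ContDiffOn ℝ (⊤ : ℕ∞) u (Metric.ball 0 1) ∧
    (∀ m : ℝ, 0 ≤ m →
      Filter.Tendsto
        (fun r : ℝ => r ^ (-m) * ∫ x in Metric.ball (0 : EuclideanSpace ℝ (Fin n)) r, |u x| ^ 2)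
        (nhdsWithin 0 (Set.Ioi 0)) (nhds 0)) ∧
    (∀ x ∈ Metric.ball (0 : EuclideanSpace ℝ (Fin n)) 1 \ {0},
      ‖fderiv ℝ u x‖ ≤ V x * u x) ∧
    IntegrableOn (fun x => V x ^ p) (Metric.ball 0 1) volume := by
  have hV' : ∀ x, V x = ε / ‖x‖ ^ (ε + 1) := by
    intro x
    rw [hV]
    split_ifs with h
    -- at the origin the formula agrees with the convention `V 0 = 0`, as `ε / 0 = 0`
    · simp [h, Real.zero_rpow (by positivity : ε + 1 ≠ 0)]
    · rfl
  refine ⟨?_, ?_, ?_, ?_⟩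
  · have hu' : u = fun x => flatPow (ε / 2) 0 (‖x‖ ^ 2) := by
      funext x
      rw [hu]
      by_cases h : x = 0
      · simp [h, flatPow]
      · have hx : 0 < ‖x‖ := norm_pos_iff.2 h
        have hx2 : ¬ (‖x‖ ^ 2 ≤ 0) := not_le.2 (by positivity)
        have e : (‖x‖ ^ 2) ^ (ε / 2) = ‖x‖ ^ ε := by
          rw [← Real.rpow_natCast, ← Real.rpow_mul hx.le]
          congr 1
          push_cast
          ring
        simp only [flatPow, h, hx2, if_false, e, Real.rpow_zero, one_mul]
    rw [hu']
    exact ((contDiff_flatPow (half_pos hε0) 0).comp (contDiff_norm_sq ℝ)).contDiffOn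
  · intro m _
    set B := Metric.ball (0 : EuclideanSpace ℝ (Fin n)) 1 with hB
    have hlim := (tendsto_rpow_mul_exp_neg_rpow hε0 (-m)).mul_const (volume.real B)
    rw [zero_mul] at hlim
    refine squeeze_zero' ?_ ?_ hlim
    · filter_upwards [self_mem_nhdsWithin] with r hr
      have hr : 0 < r := hr
      exact mul_nonneg (Real.rpow_nonneg hr.le _)
        (integral_nonneg fun x => by positivity)
    · filter_upwards [Ioo_mem_nhdsGT (one_pos : (0 : ℝ) < 1)] with r hr
      have hr0 : 0 < r := hr.1
      rw [mul_assoc]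
      refine mul_le_mul_of_nonneg_left ?_ (Real.rpow_nonneg hr0.le _)
      have hbd : ∀ x ∈ Metric.ball (0 : EuclideanSpace ℝ (Fin n)) r,
          ‖|u x| ^ 2‖ ≤ Real.exp (-(1 / r ^ ε)) := by
        intro x hx
        rw [mem_ball_zero_iff] at hx
        rw [Real.norm_of_nonneg (by positivity), hu]
        split_ifs with h
        · simpa using (Real.exp_pos _).le
        · have hx0 : 0 < ‖x‖ := norm_pos_iff.2 h
          have h1 : Real.exp (-(1 / ‖x‖ ^ ε)) ≤ 1 :=
            Real.exp_le_one_iff.2 (neg_nonpos.2 (by positivity))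
          have h2 : Real.exp (-(1 / ‖x‖ ^ ε)) ≤ Real.exp (-(1 / r ^ ε)) :=
            Real.exp_le_exp.2 (neg_le_neg (one_div_le_one_div_of_le
              (Real.rpow_pos_of_pos hx0 _) (Real.rpow_le_rpow hx0.le hx.le hε0.le)))
          rw [abs_of_pos (Real.exp_pos _)]
          exact (pow_le_of_le_one (Real.exp_pos _).le h1 two_ne_zero).trans h2
      refine (le_abs_self _).trans
        ((norm_setIntegral_le_of_norm_le_const measure_ball_lt_top hbd).trans ?_)
      exact mul_le_mul_of_nonneg_left
        (measureReal_mono (Metric.ball_subset_ball hr.2.le) measure_ball_lt_top.ne)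
        (Real.exp_pos _).le
  · rintro x ⟨-, hx⟩
    have h : x ≠ 0 := hx
    have hx0 : 0 < ‖x‖ := norm_pos_iff.2 h
    have hg := hasDerivAt_rpow_mul_exp ε 0 hx0
    have hn' : HasFDerivAt (fun y : EuclideanSpace ℝ (Fin n) => ‖y‖)
        (fderiv ℝ (fun y : EuclideanSpace ℝ (Fin n) => ‖y‖) x) x :=
      (differentiableAt_id.norm ℝ h).hasFDerivAt
    have hc := hg.comp_hasFDerivAt x hn'
    have hux : HasFDerivAt u _ x := hc.congr_of_eventuallyEq (by
      filter_upwards [isOpen_ne.mem_nhds h] with y hy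
      have hy : y ≠ 0 := hy
      simp [hu, hy])
    have h1 : ‖fderiv ℝ (fun y : EuclideanSpace ℝ (Fin n) => ‖y‖) x‖ ≤ 1 :=
      NNReal.coe_one ▸ norm_fderiv_le_of_lipschitz ℝ lipschitzWith_one_norm
    have e : ‖x‖ ^ (0 - ε - 1) = 1 / ‖x‖ ^ (ε + 1) := by
      rw [show 0 - ε - 1 = -(ε + 1) by ring, Real.rpow_neg hx0.le, one_div]
    rw [hux.fderiv, norm_smul, hV', hu, if_neg h, zero_mul, zero_add, e,
      Real.norm_of_nonneg (by positivity)]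
    refine (mul_le_of_le_one_right (by positivity) h1).trans (le_of_eq ?_)
    ring
  · have hp0 : 0 < p := by linarith
    have hfr : Module.finrank ℝ (EuclideanSpace ℝ (Fin n)) = n := by simp
    have hlt : (ε + 1) * p < n := by
      rw [lt_div_iff₀ hp0] at hε1
      linarith
    refine integrableOn_ball_of_norm_le_rpow (C := ε ^ p) (α := (ε + 1) * p)
      (by rw [hfr]; omega) (by rw [hfr]; exact hlt) (Eventually.of_forall fun x => ?_) ?_
    · have hx := norm_nonneg x
      rw [hV', Real.norm_of_nonneg (by positivity), Real.div_rpow hε0.le (by positivity),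
        ← Real.rpow_mul hx, Real.rpow_neg hx, div_eq_mul_inv]
    · have : V = fun x => ε / ‖x‖ ^ (ε + 1) := funext hV'
      rw [this]
      exact Measurable.aestronglyMeasurable (by fun_prop)
end
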